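/- arXiv:2006.07927 — 2 statements merged into one kernel-verified Lean document; each statement's English description precedes it below -/
import Mathlib

section
/- If q ∈ (1,2] does not belong to the closure 𝒰̄ of 𝒰(1) in ℝ, then the level set L(q) = {x > 0 : q_s(x) = q} is finite. -/
/-!
A digit sequence `d` is the unique `q`-expansion of its value iff every tail after a digit `0`,
and every reflected tail after a digit `1`, has value less than `1` in base `q`. These normalised
tails are `tl d m`; the strict condition is `SAdm q d`, its weak version `WAdm q d`. Both conditions
become weaker as `q` grows.

*Bases with a weakly admissible expansion `c` of `1`.* Below base `2` the expansion `c` is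
determined by the base. If all normalised tails of `c` are strictly below `c`, the base lies in
`𝒰(1)`. If some tail after a digit `0` equals `c` but no reflected tail does, then `c` is periodic,
and `exists_approx` approximates it by strictly admissible sequences, following the
Komornik–Loreti argument for prefixes which no reflected match covers; so the base lies in the
closure. Hence outside the closure `c` is antiperiodic, `c = (b b̄)^∞` (`exists_antiperiodic`).
Antiperiodic sequences are rigid: any admissible sequence starting with `b b̄` is `c` itself
(`rigid_self`, `rigid_tail`). By compactness such bases are isolated (`exists_isolating`).

*Local constancy.* If a sequence stops being admissible between two bases, then in some base in
between a limit of its normalised tails is a weakly admissible expansion of `1`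
(`exists_critical`). Therefore, for `q` outside the closure, `SAdm` is constant on some `(q - η, q]`
(`sAdm_left`), and sequences strictly admissible slightly to the right of `q` are weakly admissible
in base `q` (`wAdm_right`). The latter and rigidity show that the infimum `q_s(x) = q` is attained
(`exists_sAdm_of_levelSet`).

*Finiteness.* Fix `p < q` close to `q`. For `x ∈ L(q)` with expansion `d`, the values of `d` in bases
of `[p, q)` sweep out `(x, val p d]`, which contains `(x, (q / p) x]`, and none of them is in
`L(q)`; so distinct points of `L(q)` differ at least by the factor `q / p`. Prepending a zero to `d` and
lowering the base shows in the same way that `d` has boundedly many leading zeros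
(`ratio_pow_lt`), so `L(q)` is bounded away from `0`. As it is bounded, it is finite.
-/


open Filter Set

noncomputable section

/-- `d` is a `q`-expansion of `x`: all digits lie in `{0,1}` and
`x = ∑_{i=1}^∞ d_i q^{-i}`.  Here `d i` stands for the digit `d_{i+1}`. -/
def IsExpansion (q x : ℝ) (d : ℕ → ℕ) : Prop :=
  (∀ i, d i ≤ 1) ∧ x = ∑' i : ℕ, (d i : ℝ) / q ^ (i + 1)

/-- `𝒰(x)`: the set of bases `q ∈ (1,2]` in which `x` has a unique expansion. -/
def UnivSet (x : ℝ) : Set ℝ :=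
  {q | q ∈ Set.Ioc (1 : ℝ) 2 ∧ ∃! d : ℕ → ℕ, IsExpansion q x d}

/-- `q_s(x) = inf 𝒰(x)`. -/
def qs (x : ℝ) : ℝ := sInf (UnivSet x)

/-- The level set `L(q) = {x > 0 : q_s(x) = q}`. -/
def levelSet (q : ℝ) : Set ℝ := {x | 0 < x ∧ qs x = q}

/-- The golden ratio `q_G = (1+√5)/2`. -/
def qG : ℝ := (1 + Real.sqrt 5) / 2

/-- The Thue–Morse sequence: `tm i = s_i mod 2`, where `s_i` is the number of
`1`s in the binary representation of `i`. -/
def tm (i : ℕ) : ℕ := (Nat.digits 2 i).sum % 2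

/-- The set `S ⊆ ℕ`: `2, 3, 4 ∈ S`, and for `k ≥ 2` and `2^k < n ≤ 2^{k+1}`,
`n ∈ S` iff `n > 3·2^{k-1}` and `n - 3·2^{k-1} ∈ S`; no other elements. -/
inductive memS : ℕ → Prop
  | two : memS 2
  | three : memS 3
  | four : memS 4
  | step (k n : ℕ) (hk : 2 ≤ k) (h1 : 2 ^ k < n) (h2 : n ≤ 2 ^ (k + 1))
      (h3 : 3 * 2 ^ (k - 1) < n) (h : memS (n - 3 * 2 ^ (k - 1))) : memS n

namespace LevelSet

/-- The value `∑ d_i r^{-(i+1)}` of a binary digit sequence in base `r`. -/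
def val (r : ℝ) (d : ℕ → Bool) : ℝ := ∑' i : ℕ, ((d i).toNat : ℝ) / r ^ (i + 1)

/-- The sequence `d_n d_{n+1} …`. -/
def sh (n : ℕ) (d : ℕ → Bool) : ℕ → Bool := fun i => d (n + i)

/-- The normalised tail of `d` after position `m`: the tail itself if `d m = 0`, its
reflection if `d m = 1`. Both halves of the lexicographic description of unique expansions
become a single condition on normalised tails, and a normalised tail of a normalised tail is
again one (`tl_tl`). -/
def tl (d : ℕ → Bool) (m : ℕ) : ℕ → Bool := fun i => xor (d m) (d (m + 1 + i))

/-- Weak admissibility in base `r`: every normalised tail has value at most `1`. -/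
def WAdm (r : ℝ) (d : ℕ → Bool) : Prop := ∀ m, val r (tl d m) ≤ 1

/-- Strict admissibility in base `r`; it characterises unique expansions
(`isExpansion_unique_of_sAdm`, `exists_sAdm_of_mem`). -/
def SAdm (r : ℝ) (d : ℕ → Bool) : Prop := ∀ m, val r (tl d m) < 1

/-- The strict lexicographic order on binary sequences. -/
def Lt (y c : ℕ → Bool) : Prop := ∃ k, (∀ i < k, y i = c i) ∧ y k = false ∧ c k = true

/-! ### Values of digit sequences -/

lemma toNat_le_one (b : Bool) : ((b.toNat : ℕ) : ℝ) ≤ 1 := by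
  cases b <;> simp

lemma term_nonneg {r : ℝ} (hr : 1 < r) (d : ℕ → Bool) (i : ℕ) :
    0 ≤ ((d i).toNat : ℝ) / r ^ (i + 1) :=
  div_nonneg (Nat.cast_nonneg _) (pow_nonneg (by linarith) _)

lemma summable_geo {r : ℝ} (hr : 1 < r) : Summable fun i : ℕ => 1 / r ^ (i + 1) := by
  have h : Summable fun i : ℕ => (1 / r) ^ i :=
    summable_geometric_of_lt_one (by positivity) (by rw [div_lt_one (by linarith)]; exact hr)
  have := (summable_nat_add_iff 1).2 h
  simpa [one_div_pow] using this

lemma tsum_geo {r : ℝ} (hr : 1 < r) : ∑' i : ℕ, 1 / r ^ (i + 1) = 1 / (r - 1) := by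
  have h := tsum_geometric_of_lt_one (r := 1 / r) (by positivity)
    (by rw [div_lt_one (by linarith)]; exact hr)
  have h2 : ∀ i : ℕ, 1 / r ^ (i + 1) = (1 / r) * (1 / r) ^ i := by
    intro i; rw [one_div_pow, pow_succ]; field_simp
  have : r - 1 ≠ 0 := by linarith
  have : r ≠ 0 := by linarith
  simp_rw [h2]
  rw [tsum_mul_left, h]
  have : 1 - 1 / r ≠ 0 := by
    rw [one_sub_div ‹_›]; positivity
  field_simp

lemma summable_val {r : ℝ} (hr : 1 < r) (d : ℕ → Bool) :
    Summable fun i : ℕ => ((d i).toNat : ℝ) / r ^ (i + 1) :=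
  Summable.of_nonneg_of_le (term_nonneg hr d)
    (fun i => by gcongr; exact toNat_le_one _) (summable_geo hr)

lemma val_nonneg {r : ℝ} (hr : 1 < r) (d : ℕ → Bool) : 0 ≤ val r d :=
  tsum_nonneg (term_nonneg hr d)

lemma val_not {r : ℝ} (hr : 1 < r) (d : ℕ → Bool) :
    val r (fun i => !d i) = 1 / (r - 1) - val r d := by
  rw [eq_sub_iff_add_eq, ← tsum_geo hr, val, val,
    ← (summable_val hr (fun i => !d i)).tsum_add (summable_val hr d)]
  congr 1; ext i
  cases d i <;> simp

lemma val_le {r : ℝ} (hr : 1 < r) (d : ℕ → Bool) : val r d ≤ 1 / (r - 1) := by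
  have := val_not hr d
  have := val_nonneg hr (fun i => !d i)
  linarith

lemma val_succ {r : ℝ} (hr : 1 < r) (d : ℕ → Bool) :
    val r d = ((d 0).toNat + val r (fun i => d (i + 1))) / r := by
  rw [val, (summable_val hr d).tsum_eq_zero_add, add_div, val, ← tsum_div_const]
  congr 1
  · simp
  · congr 1; ext i; rw [pow_succ r (i + 1), div_div]

/-- Two sequences agreeing before position `k` differ in value by the scaled difference of
what follows. -/
lemma val_sub {r : ℝ} (hr : 1 < r) (k : ℕ) : ∀ y c : ℕ → Bool, (∀ i < k, y i = c i) →
    val r y - val r c = (((y k).toNat + val r (sh (k + 1) y)) -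
      ((c k).toNat + val r (sh (k + 1) c))) / r ^ (k + 1) := by
  induction k with
  | zero =>
    intro y c _
    have h (d : ℕ → Bool) : sh (0 + 1) d = fun i => d (i + 1) := by
      ext i; simp [sh, add_comm]
    rw [val_succ hr y, val_succ hr c, h, h]; ring
  | succ k ih =>
    intro y c h
    have e (d : ℕ → Bool) : sh (k + 1 + 1) d = sh (k + 1) (fun i => d (i + 1)) := by
      ext i; simp only [sh]; congr 1; omega
    have := ih (fun i => y (i + 1)) (fun i => c (i + 1)) (fun i hi => h _ (by omega))
    rw [val_succ hr y, val_succ hr c, h 0 (by omega), e, e, pow_succ r (k + 1), ← div_div, ← this]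
    ring

lemma tl_false {d : ℕ → Bool} {m : ℕ} (h : d m = false) : tl d m = sh (m + 1) d := by
  ext i; simp [tl, sh, h]

lemma tl_true {d : ℕ → Bool} {m : ℕ} (h : d m = true) :
    tl d m = fun i => !sh (m + 1) d i := by
  ext i; simp [tl, sh, h]

lemma val_tl_true {r : ℝ} (hr : 1 < r) {d : ℕ → Bool} {m : ℕ} (h : d m = true) :
    val r (sh (m + 1) d) = 1 / (r - 1) - val r (tl d m) := by
  rw [tl_true h, val_not hr]; ring

lemma tl_tl (d : ℕ → Bool) (m k : ℕ) : tl (tl d m) k = tl d (m + 1 + k) := by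
  ext i
  simp only [tl, show m + 1 + (k + 1 + i) = m + 1 + k + 1 + i by ring]
  cases d m <;> cases d (m + 1 + k) <;> simp

lemma WAdm.tl {r : ℝ} {d : ℕ → Bool} (h : WAdm r d) (m : ℕ) : WAdm r (tl d m) := fun k => by
  rw [tl_tl]; exact h _

lemma SAdm.wAdm {r : ℝ} {d : ℕ → Bool} (h : SAdm r d) : WAdm r d := fun m => (h m).le

/-- Lowering the base multiplies the value of a sequence starting with `m` zeros by at least
`(q / p) ^ (m + 1)`. -/
lemma val_ratio {p q : ℝ} (hp : 1 < p) (hpq : p ≤ q) (d : ℕ → Bool) (m : ℕ)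
    (h : ∀ i < m, d i = false) : (q / p) ^ (m + 1) * val q d ≤ val p d := by
  have hq : 1 < q := hp.trans_le hpq
  rw [val, ← tsum_mul_left]
  refine Summable.tsum_le_tsum (fun i => ?_) ((summable_val hq d).mul_left _) (summable_val hp d)
  rcases lt_or_ge i m with hi | hi
  · simp [h i hi]
  · have h1 : (q / p) ^ (m + 1) ≤ (q / p) ^ (i + 1) :=
      pow_le_pow_right₀ ((one_le_div (by linarith)).2 hpq) (by omega)
    calc (q / p) ^ (m + 1) * (((d i).toNat : ℝ) / q ^ (i + 1))
        ≤ (q / p) ^ (i + 1) * (((d i).toNat : ℝ) / q ^ (i + 1)) := by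
          gcongr
      _ = ((d i).toNat : ℝ) / p ^ (i + 1) := by
          have : q ≠ 0 := by linarith
          have : p ≠ 0 := by linarith
          rw [div_pow]; field_simp

lemma val_anti {p q : ℝ} (hp : 1 < p) (hpq : p ≤ q) (d : ℕ → Bool) : val q d ≤ val p d := by
  have h := val_ratio hp hpq d 0 (by simp)
  have h1 : 1 ≤ q / p := (one_le_div (by linarith)).2 hpq
  have := val_nonneg (hp.trans_le hpq) d
  simp only [zero_add, pow_one] at h
  nlinarith

lemma val_strictAnti {p q : ℝ} (hp : 1 < p) (hpq : p < q) {d : ℕ → Bool} (hd : 0 < val q d) :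
    val q d < val p d := by
  have h := val_ratio hp hpq.le d 0 (by simp)
  have h1 : 1 < q / p := (one_lt_div (by linarith)).2 hpq
  simp only [zero_add, pow_one] at h
  nlinarith

lemma val_inj {p q x : ℝ} (hp : 1 < p) (hq : 1 < q) {d : ℕ → Bool} (hx : 0 < x)
    (h1 : val p d = x) (h2 : val q d = x) : p = q := by
  rcases lt_trichotomy p q with h | h | h
  · have := val_strictAnti hp h (d := d) (by linarith); linarith
  · exact h
  · have := val_strictAnti hq h (d := d) (by linarith); linarith

lemma exists_true_of_val_pos {r : ℝ} {d : ℕ → Bool} (h : 0 < val r d) : ∃ i, d i = true := by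
  by_contra! hc
  have : val r d = 0 := by simp [val, hc]
  linarith

lemma WAdm.mono {p q : ℝ} (hp : 1 < p) (hpq : p ≤ q) {d : ℕ → Bool} (h : WAdm p d) :
    WAdm q d := fun m => (val_anti hp hpq _).trans (h m)

lemma SAdm.mono {p q : ℝ} (hp : 1 < p) (hpq : p ≤ q) {d : ℕ → Bool} (h : SAdm p d) :
    SAdm q d := fun m => (val_anti hp hpq _).trans_lt (h m)

lemma continuousOn_val {s : ℝ} (hs1 : 1 < s) :
    ContinuousOn (fun z : ℝ × (ℕ → Bool) => val z.1 z.2) (Ioi s ×ˢ univ) := by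
  unfold val
  refine continuousOn_tsum (u := fun i => 1 / s ^ (i + 1)) (fun i => ?_) (summable_geo hs1) ?_
  · have : Continuous fun b : Bool => (b.toNat : ℝ) := continuous_of_discreteTopology
    have h1 : Continuous fun z : ℝ × (ℕ → Bool) => ((z.2 i).toNat : ℝ) :=
      this.comp ((continuous_apply i).comp continuous_snd)
    refine h1.continuousOn.div (continuous_fst.pow _).continuousOn ?_
    rintro z hz
    have h0 : s < z.1 := hz.1
    exact pow_ne_zero _ (by linarith)
  · rintro i z hz
    have h0 : s < z.1 := hz.1
    have h1 : 1 < z.1 := hs1.trans h0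
    rw [Real.norm_of_nonneg (term_nonneg h1 _ i)]
    exact div_le_div₀ zero_le_one (toNat_le_one _) (pow_pos (by linarith) _)
      (pow_le_pow_left₀ (by linarith) h0.le _)

lemma tendsto_val {ι : Type*} {l : Filter ι} {r : ℝ} (hr : 1 < r) {d : ℕ → Bool}
    {rk : ι → ℝ} {dk : ι → ℕ → Bool} (h1 : Tendsto rk l (nhds r)) (h2 : Tendsto dk l (nhds d)) :
    Tendsto (fun k => val (rk k) (dk k)) l (nhds (val r d)) := by
  obtain ⟨s, hs1, hs2⟩ := exists_between hr
  have ha : ContinuousAt (fun z : ℝ × (ℕ → Bool) => val z.1 z.2) (r, d) :=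
    (continuousOn_val hs1).continuousAt (prod_mem_nhds (Ioi_mem_nhds hs2) univ_mem)
  have hp : Tendsto (fun k => (rk k, dk k)) l (nhds (r, d)) := h1.prodMk_nhds h2
  have := Tendsto.comp ha.tendsto hp
  exact this

lemma continuous_tl (m : ℕ) : Continuous fun d : ℕ → Bool => tl d m := by
  refine continuous_pi fun i => ?_
  have : Continuous fun b : Bool × Bool => xor b.1 b.2 := continuous_of_discreteTopology
  exact this.comp (f := fun d : ℕ → Bool => (d m, d (m + 1 + i)))
    ((continuous_apply m).prodMk (continuous_apply (m + 1 + i)))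

lemma wAdm_of_tendsto {r : ℝ} (hr : 1 < r) {d : ℕ → Bool}
    {rk : ℕ → ℝ} {dk : ℕ → ℕ → Bool} (h1 : Tendsto rk atTop (nhds r))
    (h2 : Tendsto dk atTop (nhds d)) (h : ∀ᶠ k in atTop, WAdm (rk k) (dk k)) : WAdm r d := by
  intro m
  refine le_of_tendsto (tendsto_val hr h1 (((continuous_tl m).tendsto d).comp h2)) ?_
  filter_upwards [h] with k hk using hk m

lemma eventually_agree {d : ℕ → Bool} {dk : ℕ → ℕ → Bool}
    (h : Tendsto dk atTop (nhds d)) (N : ℕ) : ∀ᶠ k in atTop, ∀ i < N, dk k i = d i := by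
  have : ∀ i ∈ Finset.range N, ∀ᶠ k in atTop, dk k i = d i := fun i _ => by
    have := (tendsto_pi_nhds.1 h) i
    rw [nhds_discrete, tendsto_pure] at this
    exact this
  have := (Finset.eventually_all _).2 this
  filter_upwards [this] with k hk i hi using hk i (Finset.mem_range.2 hi)

/-- A base between `a` and `b` with prescribed value, by the intermediate value theorem. -/
lemma exists_val_eq {a b x : ℝ} (ha : 1 < a) (hab : a ≤ b) {d : ℕ → Bool}
    (h1 : x ≤ val a d) (h2 : val b d ≤ x) : ∃ p ∈ Icc a b, val p d = x := by
  have hc : ContinuousOn (fun p => val p d) (Icc a b) := fun p hp =>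
    tendsto_val (lt_of_lt_of_le ha hp.1) (tendsto_id.mono_left nhdsWithin_le_nhds)
      tendsto_const_nhds
  exact intermediate_value_Icc' hab hc ⟨h2, h1⟩

/-! ### Value order and lexicographic order -/

lemma lt_trichotomy' (y c : ℕ → Bool) : Lt y c ∨ y = c ∨ Lt c y := by
  classical
  by_cases h : y = c
  · exact Or.inr (Or.inl h)
  have h' : ∃ k, y k ≠ c k := by
    by_contra! hc; exact h (funext hc)
  have h1 := Nat.find_spec h'
  have h2 : ∀ i < Nat.find h', y i = c i := fun i hi => not_not.1 (Nat.find_min h' hi)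
  cases hy : y (Nat.find h') <;> cases hcc : c (Nat.find h')
  · simp [hy, hcc] at h1
  · exact Or.inl ⟨_, h2, hy, hcc⟩
  · exact Or.inr (Or.inr ⟨_, fun i hi => (h2 i hi).symm, hcc, hy⟩)
  · simp [hy, hcc] at h1

/-- Below base `2` the value order on weakly admissible sequences refines to the lexicographic
order: in base `2` this fails because `0 1^∞` and `1 0^∞` have the same value. -/
lemma not_lt_of_val_le {r : ℝ} (hr : 1 < r) (hr2 : r < 2) {y c : ℕ → Bool} (hy : WAdm r y)
    (hc : WAdm r c) (h : val r y ≤ val r c) : ¬ Lt c y := by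
  rintro ⟨k, hk, h0, h1⟩
  have e := val_sub hr k c y hk
  have a1 := hc k
  rw [tl_false h0] at a1
  have a2 := hy k
  have a3 := val_tl_true hr h1
  have : 1 < 1 / (r - 1) := by rw [lt_div_iff₀ (by linarith)]; linarith
  rw [h0, h1] at e
  have : 0 ≤ (((false.toNat : ℕ) : ℝ) + val r (sh (k + 1) c) -
    (((true.toNat : ℕ) : ℝ) + val r (sh (k + 1) y))) / r ^ (k + 1) := by linarith
  have hpos : 0 < r ^ (k + 1) := by positivity
  rw [le_div_iff₀ hpos] at this
  simp at this
  linarith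

lemma eq_of_val_eq {r : ℝ} (hr : 1 < r) (hr2 : r < 2) {y c : ℕ → Bool} (hy : WAdm r y)
    (hc : WAdm r c) (h : val r y = val r c) : y = c := by
  rcases lt_trichotomy' y c with h1 | h1 | h1
  · exact absurd h1 (not_lt_of_val_le hr hr2 hc hy h.ge)
  · exact h1
  · exact absurd h1 (not_lt_of_val_le hr hr2 hy hc h.le)

/-- Parry's lemma: if every normalised tail of the expansion `c` of `1` is lexicographically
smaller than `c`, then every normalised tail has value smaller than `1`. -/
lemma sAdm_of_lex {r : ℝ} (hr : 1 < r) {c : ℕ → Bool} (hc : val r c = 1)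
    (h : ∀ m, Lt (tl c m) c) : SAdm r c := by
  have key : ∀ m, ∃ k m', val r (tl c m) - 1 =
      (val r (tl c m') - 1 - val r (sh (k + 1) c)) / r ^ (k + 1) ∧ c k = true := by
    intro m
    obtain ⟨k, hk, h0, h1⟩ := h m
    refine ⟨k, m + 1 + k, ?_, h1⟩
    have e := val_sub hr k (tl c m) c hk
    rw [hc, h0, h1, ← tl_false h0, tl_tl] at e
    rw [e]; simp; ring
  have bdd : BddAbove (range fun m => val r (tl c m)) := by
    refine ⟨1 / (r - 1), ?_⟩
    rintro _ ⟨m, rfl⟩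
    exact val_le hr _
  have hS : ∀ m, val r (tl c m) ≤ 1 := by
    by_contra! hcon
    obtain ⟨m0, hm0⟩ := hcon
    set S := ⨆ m, val r (tl c m) with hSd
    have hS1 : 1 < S := hm0.trans_le (le_ciSup bdd m0)
    have : S ≤ 1 + (S - 1) / r := by
      refine ciSup_le fun m => ?_
      obtain ⟨k, m', e, -⟩ := key m
      have h1 : val r (tl c m') ≤ S := le_ciSup bdd m'
      have h2 := val_nonneg hr (sh (k + 1) c)
      have h3 : (val r (tl c m') - 1 - val r (sh (k + 1) c)) / r ^ (k + 1) ≤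
          (S - 1) / r ^ (k + 1) :=
        div_le_div_of_nonneg_right (by linarith) (by positivity)
      have h4 : (S - 1) / r ^ (k + 1) ≤ (S - 1) / r :=
        div_le_div_of_nonneg_left (by linarith) (by linarith) (le_self_pow₀ hr.le (by omega))
      linarith
    have h5 : (S - 1) / r < S - 1 := div_lt_self (by linarith) hr
    linarith
  intro m
  obtain ⟨k, m', e, hk⟩ := key m
  have hpos : 0 < val r (sh (k + 1) c) := by
    rcases (val_nonneg hr (sh (k + 1) c)).lt_or_eq with h0 | h0
    · exact h0
    exfalso
    obtain ⟨j, -, h1, -⟩ := h k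
    have h3 : sh (k + 1) c j = true := by
      rw [tl_true hk] at h1; simpa using h1
    have h2 : 0 < ((sh (k + 1) c j).toNat : ℝ) / r ^ (j + 1) := by
      rw [h3]; simp; positivity
    have := (summable_val hr (sh (k + 1) c)).le_tsum j (fun i _ => term_nonneg hr _ i)
    rw [val] at h0
    linarith
  have := hS m'
  have : (val r (tl c m') - 1 - val r (sh (k + 1) c)) / r ^ (k + 1) < 0 :=
    div_neg_of_neg_of_pos (by linarith) (by positivity)
  linarith

/-! ### Unique expansions and strict admissibility -/

lemma isExpansion_iff {r x : ℝ} {e : ℕ → ℕ} :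
    IsExpansion r x e ↔ ∃ d : ℕ → Bool, e = (fun i => (d i).toNat) ∧ val r d = x := by
  constructor
  · rintro ⟨h1, h2⟩
    have he : e = fun i => (decide (e i = 1)).toNat := by
      ext i
      have := h1 i
      rcases Nat.le_one_iff_eq_zero_or_eq_one.1 this with h | h <;> simp [h]
    refine ⟨fun i => decide (e i = 1), he, ?_⟩
    rw [h2, val]
    congr 1; ext i
    rw [← congrFun he i]
  · rintro ⟨d, rfl, rfl⟩
    exact ⟨fun i => Bool.toNat_le (d i), rfl⟩

lemma val_unique_of_sAdm {r : ℝ} (hr : 1 < r) {d y : ℕ → Bool} (hd : SAdm r d)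
    (h : val r y = val r d) : y = d := by
  rcases lt_trichotomy' y d with ⟨k, hk, h0, h1⟩ | h1 | ⟨k, hk, h0, h1⟩
  · have e := val_sub hr k y d hk
    have a1 := hd k
    have a2 := val_tl_true hr h1
    have a3 := val_le hr (sh (k + 1) y)
    rw [h, h0, h1, sub_self, eq_comm, div_eq_zero_iff] at e
    rcases e with e | e
    · simp at e; linarith
    · exact absurd e (by positivity)
  · exact h1
  · have e := val_sub hr k d y hk
    have a1 := hd k
    rw [tl_false h0] at a1
    have a3 := val_nonneg hr (sh (k + 1) y)
    rw [h, h0, h1, sub_self, eq_comm, div_eq_zero_iff] at e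
    rcases e with e | e
    · simp at e; linarith
    · exact absurd e (by positivity)

lemma mem_univSet_of_sAdm {r x : ℝ} (hr : 1 < r) (hr2 : r ≤ 2) {d : ℕ → Bool} (hd : SAdm r d)
    (hx : val r d = x) : r ∈ UnivSet x := by
  refine ⟨⟨hr, hr2⟩, fun i => (d i).toNat, isExpansion_iff.2 ⟨d, rfl, hx⟩, ?_⟩
  intro e he
  obtain ⟨y, rfl, hy⟩ := isExpansion_iff.1 he
  rw [val_unique_of_sAdm hr hd (hy.trans hx.symm)]

/-- In base `r ∈ (1, 2]` every point of `[0, 1 / (r - 1)]` has an expansion, namely the greedy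
one. -/
lemma exists_val {r x : ℝ} (hr : 1 < r) (hr2 : r ≤ 2) (hx : 0 ≤ x) (hx2 : x ≤ 1 / (r - 1)) :
    ∃ d, val r d = x := by
  classical
  let rem : ℕ → ℝ := fun n => Nat.rec x (fun _ y => r * y - if 1 ≤ r * y then 1 else 0) n
  have rs : ∀ n, rem (n + 1) = r * rem n - if 1 ≤ r * rem n then 1 else 0 := fun n => rfl
  have h1 : 1 ≤ 1 / (r - 1) := by rw [le_div_iff₀ (by linarith)]; linarith
  have hB : r * (1 / (r - 1)) - 1 = 1 / (r - 1) := by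
    have : r - 1 ≠ 0 := by linarith
    field_simp; ring
  have hrem : ∀ n, 0 ≤ rem n ∧ rem n ≤ 1 / (r - 1) := by
    intro n
    induction n with
    | zero => exact ⟨hx, hx2⟩
    | succ n ih =>
      rw [rs]
      have := mul_le_mul_of_nonneg_left ih.2 (by linarith : 0 ≤ r)
      have := mul_nonneg (by linarith : 0 ≤ r) ih.1
      split_ifs with hc
      · constructor <;> linarith
      · constructor <;> linarith
  let d : ℕ → Bool := fun n => decide (1 ≤ r * rem n)
  have hd : ∀ n, ((d n).toNat : ℝ) = if 1 ≤ r * rem n then 1 else 0 := by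
    intro n; simp only [d]; split_ifs with hc <;> simp [hc]
  have key : ∀ n, x - val r d = (rem n - val r (sh n d)) / r ^ n := by
    intro n
    induction n with
    | zero =>
      have : sh 0 d = d := by ext i; simp [sh]
      rw [this]; simp [rem]
    | succ n ih =>
      have e : (fun i => sh n d (i + 1)) = sh (n + 1) d :=
        funext fun i => congrArg d (by omega : n + (i + 1) = n + 1 + i)
      have hr0 : r ≠ 0 := by linarith
      rw [ih, rs, val_succ hr (sh n d), e, ← hd n]
      simp only [sh, add_zero]
      rw [pow_succ]
      field_simp
      ring
  refine ⟨d, ?_⟩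
  have hlim : Tendsto (fun n : ℕ => (1 / (r - 1)) * (1 / r) ^ n) atTop (nhds 0) := by
    simpa using (tendsto_pow_atTop_nhds_zero_of_lt_one (by positivity : 0 ≤ 1 / r)
      (by rw [div_lt_one (by linarith)]; exact hr)).const_mul (1 / (r - 1))
  have hle : ∀ n : ℕ, |x - val r d| ≤ (1 / (r - 1)) * (1 / r) ^ n := by
    intro n
    have hp : 0 < r ^ n := by positivity
    rw [key n, abs_div, abs_of_pos hp, one_div_pow, mul_one_div]
    refine div_le_div_of_nonneg_right ?_ hp.le
    have := hrem n
    have := val_nonneg hr (sh n d)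
    have := val_le hr (sh n d)
    rw [abs_le]; constructor <;> linarith
  have := ge_of_tendsto' hlim hle
  have := abs_nonpos_iff.1 this
  linarith

lemma exists_sAdm_of_mem {r x : ℝ} (h : r ∈ UnivSet x) : ∃ d, SAdm r d ∧ val r d = x := by
  obtain ⟨⟨hr, hr2⟩, e, he, hu⟩ := h
  obtain ⟨d, rfl, hd⟩ := isExpansion_iff.1 he
  refine ⟨d, ?_, hd⟩
  by_contra hc
  unfold SAdm at hc
  push Not at hc
  obtain ⟨m, hm⟩ := hc
  have hn := val_nonneg hr (sh (m + 1) d)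
  have hn' := val_le hr (sh (m + 1) d)
  -- Flipping the digit `m` leaves a remainder that can still be expanded.
  obtain ⟨z, hz⟩ : ∃ z, val r z =
      val r (sh (m + 1) d) + (d m).toNat - (!d m).toNat := by
    cases hdm : d m
    · rw [tl_false hdm] at hm
      apply exists_val hr hr2 <;> simp <;> simp at hn' <;> linarith
    · have := val_tl_true hr hdm
      apply exists_val hr hr2 <;> simp <;> simp at this <;> linarith
  let y : ℕ → Bool := fun i => if i < m then d i else if i = m then !d m else z (i - (m + 1))
  have hy1 : ∀ i < m, y i = d i := fun i hi => by simp [y, hi]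
  have hy2 : y m = !d m := by simp [y]
  have hy3 : sh (m + 1) y = z := by
    ext i
    simp [sh, y, show ¬ (m + 1 + i < m) by omega, show ¬ (m + 1 + i = m) by omega]
  have hv := val_sub hr m y d hy1
  rw [hy2, hy3, hz] at hv
  have hv' : val r y - val r d = 0 := by rw [hv]; ring
  have hyx : val r y = x := by linarith
  have := hu _ (isExpansion_iff.2 ⟨y, rfl, hyx⟩)
  have := congrFun this m
  simp only [hy2] at this
  cases hdm : d m <;> simp [hdm] at this

/-! ### Rigidity of antiperiodic sequences -/

/-- If `c = (b b̄)^∞` with `b` ending in the digit `1`, then the only sequence starting with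
`b b̄` all of whose normalised tails are at most itself is `c`. -/
lemma rigid_self {c c' : ℕ → Bool} {n : ℕ} (hn : c n = true) (ht : tl c n = c)
    (hL : ∀ m, ¬ Lt c' (tl c' m)) (ha : ∀ i < 2 * (n + 1), c' i = c i) : c' = c := by
  have hc : ∀ i, c (n + 1 + i) = !c i := by
    intro i
    have := congrFun ht i
    simp only [tl, hn] at this
    rw [← this]; simp
  have hc' : ∀ i, c' (n + 1 + i) = !c' i := by
    intro i
    induction i using Nat.strong_induction_on with
    | _ i ih =>
      by_cases hi : i < n + 1
      · rw [ha _ (by omega), ha _ (by omega), hc]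
      by_contra hne
      have e1 : c' (n + 1 + i) = c' i := by
        revert hne; cases c' (n + 1 + i) <;> cases c' i <;> simp
      have hn' : c' n = true := by rw [ha n (by omega), hn]
      have e2 : c' i = true := by
        by_contra h0
        simp only [Bool.not_eq_true] at h0
        refine hL n ⟨i, fun k hk => ?_, h0, ?_⟩
        · simp [tl, hn', ih k hk]
        · simp [tl, hn', e1, h0]
      obtain ⟨k, rfl⟩ : ∃ k, i = n + 1 + k := ⟨i - (n + 1), by omega⟩
      have hf : c' (n + 1 + n) = false := by
        rw [ha _ (by omega), hc, hn]; rfl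
      have e3 : c' k = false := by
        have := ih k (by omega)
        rw [e2] at this; simpa using this.symm
      refine hL (n + 1 + n) ⟨k, fun j hj => ?_, e3, ?_⟩
      · simp only [tl, hf, Bool.false_xor]
        rw [show n + 1 + n + 1 + j = n + 1 + (n + 1 + j) by ring, ih _ (by omega), ih _ (by omega)]
        simp
      · simp only [tl, hf, Bool.false_xor]
        rw [show n + 1 + n + 1 + k = n + 1 + (n + 1 + k) by ring, e1, e2]
  ext i
  induction i using Nat.strong_induction_on with
  | _ i ih =>
    by_cases hi : i < n + 1
    · rw [ha i (by omega)]
    · obtain ⟨k, rfl⟩ : ∃ k, i = n + 1 + k := ⟨i - (n + 1), by omega⟩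
      rw [hc, hc', ih k (by omega)]

/-- If `c = (b b̄)^∞` with `b` ending in the digit `1`, and `t` starts with `b` while neither `t`
nor its normalised tail after `b` exceeds `c`, then `t = c`. -/
lemma rigid_tail {c t : ℕ → Bool} {n : ℕ} (hn : c n = true) (ht : tl c n = c)
    (h1 : ¬ Lt c t) (h2 : ¬ Lt c (tl t n)) (ha : ∀ i < n + 1, t i = c i) : t = c := by
  have hc : ∀ i, c (n + 1 + i) = !c i := by
    intro i
    have := congrFun ht i
    simp only [tl, hn] at this
    rw [← this]; simp
  rcases lt_trichotomy' t c with ⟨k, hk, e0, e1⟩ | h | h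
  · exfalso
    have hk' : n + 1 ≤ k := by
      by_contra hlt
      have := ha k (by omega)
      simp [e0, e1] at this
    obtain ⟨j, rfl⟩ : ∃ j, k = n + 1 + j := ⟨k - (n + 1), by omega⟩
    have htn : t n = true := by rw [ha n (by omega), hn]
    refine h2 ⟨j, fun i hi => ?_, ?_, ?_⟩
    · simp [tl, htn, hk (n + 1 + i) (by omega), hc]
    · rw [hc] at e1; simpa using e1
    · simp [tl, htn, e0]
  · exact h
  · exact absurd h h1

/-! ### Periodic sequences are limits of strictly admissible ones -/

/-- Position `j` carries the digit `1` and does not lie in any maximal match of a reflected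
tail `tl c m` (with `c m = 1`) against `c`. Lowering the digit `j` at such a position creates no
new large normalised tail. -/
def Uncov (c : ℕ → Bool) (j : ℕ) : Prop :=
  c j = true ∧ ∀ m < j, c m = true → ∃ i, m + 1 + i ≤ j ∧ tl c m i ≠ c i

/-- Uncovered positions are unbounded: if `j` is covered and `m` is the leftmost start of a match
covering it, then the position just after the end of that match is uncovered. -/
lemma exists_uncov {c : ℕ → Bool} (hL : ∀ m, ¬ Lt c (tl c m))
    (hS : ∀ m, c m = true → Lt (tl c m) c) {j : ℕ} (hj : c j = true) :
    ∃ j' ≥ j, Uncov c j' := by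
  classical
  by_cases hu : Uncov c j
  · exact ⟨j, le_rfl, hu⟩
  have hcov : ∃ m, m < j ∧ c m = true ∧ ∀ i, m + 1 + i ≤ j → tl c m i = c i := by
    by_contra! hcon
    exact hu ⟨hj, hcon⟩
  obtain ⟨hm1, hm2, hm3⟩ := Nat.find_spec hcov
  have hmin := fun m' (h : m' < Nat.find hcov) => Nat.find_min hcov h
  set m := Nat.find hcov
  obtain ⟨k, hk, hk0, hk1⟩ := hS m hm2
  have hkj : j < m + 1 + k := by
    by_contra! hle
    have := hm3 k hle
    simp [hk0, hk1] at this
  have hcj : c (m + 1 + k) = true := by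
    simpa [tl, hm2] using hk0
  refine ⟨m + 1 + k, hkj.le, hcj, fun m' hm' hcm' => ?_⟩
  by_contra! hcon
  rcases lt_trichotomy m' m with h | h | h
  · exact hmin m' h ⟨by omega, hcm', fun i hi => hcon i (by omega)⟩
  · subst h
    have := hcon k le_rfl
    simp [hk0, hk1] at this
  · obtain ⟨s, rfl⟩ : ∃ s, m' = m + 1 + s := ⟨m' - (m + 1), by omega⟩
    have hs : c s = false := by
      rw [← hk s (by omega)]; simp [tl, hm2, hcm']
    obtain ⟨i, rfl⟩ : ∃ i, k = s + 1 + i := ⟨k - (s + 1), by omega⟩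
    refine hL s ⟨i, fun a ha => ?_, ?_, ?_⟩
    · have e1 := hcon a (by omega)
      have e2 := hk (s + 1 + a) (by omega)
      simp only [tl, hcm', hs, hm2] at e1 e2 ⊢
      rw [show m + 1 + (s + 1 + a) = m + 1 + s + 1 + a by ring] at e2
      rw [← e1, ← e2]; simp
    · have e1 := hcon i (by omega)
      rw [← e1]
      simp only [tl, hcm']
      rw [show m + 1 + s + 1 + i = m + 1 + (s + 1 + i) by ring, hcj]; rfl
    · simp [tl, hs, hk1]

/-- The reflected tails of `c` match `c` for at most `K` digits. -/
def MatchBound (c : ℕ → Bool) (K : ℕ) : Prop :=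
  ∀ m, c m = true → ∃ k ≤ K, (∀ i < k, tl c m i = c i) ∧ tl c m k = false ∧ c k = true

lemma exists_matchBound {c : ℕ → Bool} {p : ℕ} (hp : 0 < p) (hper : Function.Periodic c p)
    (hS : ∀ m, c m = true → Lt (tl c m) c) : ∃ K, MatchBound c K := by
  have h : ∀ m, ∃ k, c m = true →
      (∀ i < k, tl c m i = c i) ∧ tl c m k = false ∧ c k = true := by
    intro m
    by_cases hm : c m = true
    · obtain ⟨k, hk⟩ := hS m hm
      exact ⟨k, fun _ => hk⟩
    · exact ⟨0, fun h => absurd h hm⟩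
  choose f hf using h
  refine ⟨(Finset.range p).sup f, fun m hm => ⟨f (m % p), ?_, ?_⟩⟩
  · exact Finset.le_sup (Finset.mem_range.2 (Nat.mod_lt _ hp))
  · have e : tl c (m % p) = tl c m := by
      ext i
      have h1 : c (m % p) = c m := hper.map_mod_nat m
      have h2 : c (m % p + 1 + i) = c (m + 1 + i) := by
        rw [← hper.map_mod_nat (m + 1 + i), ← hper.map_mod_nat (m % p + 1 + i)]
        congr 1
        simp [Nat.add_mod]
      simp [tl, h1, h2]
    have := hf (m % p) (by rw [hper.map_mod_nat m]; exact hm)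
    rwa [e] at this

/-- If `y` is obtained from `c` by lowering an uncovered digit `J` and then starting again as
`c`, all normalised tails of `y` before `J` are smaller than any `z` that agrees with `c` up to
`J`. -/
lemma lt_of_uncov {c : ℕ → Bool} {K J : ℕ} (hL : ∀ m, ¬ Lt c (tl c m)) (hK : MatchBound c K)
    (hJ : Uncov c J) (hKJ : 2 * K + 1 < J) {y z : ℕ → Bool} (hy : ∀ i < J, y i = c i)
    (hyJ : y J = false) (hv : ∀ i ≤ K, y (J + 1 + i) = c i) (hz : ∀ i < J, z i = c i)
    {m : ℕ} (hm : m < J) : Lt (tl y m) z := by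
  classical
  cases hcm : c m
  · by_cases hA : ∃ i, m + 1 + i < J ∧ c (m + 1 + i) ≠ c i
    · obtain ⟨h1, h2⟩ := Nat.find_spec hA
      have hmin : ∀ i < Nat.find hA, c (m + 1 + i) = c i := fun i hi => by
        by_contra hne
        exact Nat.find_min hA hi ⟨by omega, hne⟩
      set i := Nat.find hA
      have hci : c i = true := by
        by_contra h0
        simp only [Bool.not_eq_true] at h0
        refine hL m ⟨i, fun a ha => ?_, h0, ?_⟩
        · simp [tl, hcm, hmin a ha]
        · simpa [tl, hcm, h0] using h2
      refine ⟨i, fun a ha => ?_, ?_, ?_⟩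
      · rw [hz a (by omega), ← hmin a ha]
        simp [tl, hy m hm, hcm, hy (m + 1 + a) (by omega)]
      · simp only [tl, hy m hm, hcm, hy (m + 1 + i) h1]
        simpa [hci] using h2
      · rw [hz i (by omega), hci]
    · push Not at hA
      obtain ⟨i, rfl⟩ : ∃ i, J = m + 1 + i := ⟨J - (m + 1), by omega⟩
      have hci : c i = true := by
        by_contra h0
        simp only [Bool.not_eq_true] at h0
        refine hL m ⟨i, fun a ha => ?_, h0, ?_⟩
        · simp [tl, hcm, hA a (by omega)]
        · simp [tl, hcm, hJ.1]
      refine ⟨i, fun a ha => ?_, ?_, ?_⟩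
      · rw [hz a (by omega), ← hA a (by omega)]
        simp [tl, hy m hm, hcm, hy (m + 1 + a) (by omega)]
      · simp [tl, hy m hm, hcm, hyJ]
      · rw [hz i (by omega), hci]
  · obtain ⟨k, hkK, hk, hk0, hk1⟩ := hK m hcm
    have hkJ : m + 1 + k ≤ J := by
      obtain ⟨i, hi, hne⟩ := hJ.2 m hm hcm
      have : k ≤ i := by
        by_contra! hlt
        exact hne (hk i hlt)
      omega
    rcases hkJ.lt_or_eq with hlt | heq
    · refine ⟨k, fun a ha => ?_, ?_, ?_⟩
      · rw [hz a (by omega), ← hk a ha]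
        simp [tl, hy m hm, hcm, hy (m + 1 + a) (by omega)]
      · rw [← hk0]
        simp [tl, hy m hm, hcm, hy (m + 1 + k) hlt]
      · rw [hz k (by omega), hk1]
    -- The lowered digit extends the match by one; the match bound, applied to the reflection
    -- of the restarted sequence, then ends it.
    · obtain ⟨k', hkK', hk', hk0', hk1'⟩ := hK k hk1
      refine ⟨k + 1 + k', fun a ha => ?_, ?_, ?_⟩
      · rw [hz a (by omega)]
        rcases lt_trichotomy a k with h | h | h
        · rw [← hk a h]
          simp [tl, hy m hm, hcm, hy (m + 1 + a) (by omega)]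
        · subst h
          simp [tl, hy m hm, hcm, heq, hyJ, hk1]
        · obtain ⟨b, rfl⟩ : ∃ b, a = k + 1 + b := ⟨a - (k + 1), by omega⟩
          have e := hk' b (by omega)
          have e2 := hv b (by omega)
          simp only [tl, hk1] at e
          simp only [tl, hy m hm, hcm]
          rw [show m + 1 + (k + 1 + b) = J + 1 + b by omega, e2, ← e]
          simp
      · have e2 := hv k' hkK'
        simp only [tl, hy m hm, hcm]
        rw [show m + 1 + (k + 1 + k') = J + 1 + k' by omega, e2, hk1']
        rfl
      · rw [hz _ (by omega)]
        simp only [tl, hk1, Bool.true_xor, Bool.not_eq_false'] at hk0'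
        exact hk0'.trans rfl

/-- A periodic sequence that is weakly, and on the reflected side strictly, lexicographically
admissible is a limit of strictly admissible sequences: write `c^{(j)}` for the prefix of `c`
ending at `j` with its last digit lowered; then `c^{(j)} (c^{(j')})^∞` works for uncovered
`j' < j`. -/
lemma exists_approx {c : ℕ → Bool} {p : ℕ} (hp : 0 < p) (hper : Function.Periodic c p)
    (h0 : c 0 = true) (hL : ∀ m, ¬ Lt c (tl c m))
    (hS : ∀ m, c m = true → Lt (tl c m) c) (J : ℕ) :
    ∃ e : ℕ → Bool, (∀ i < J, e i = c i) ∧ ∀ m, Lt (tl e m) e := by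
  obtain ⟨K, hK⟩ := exists_matchBound hp hper hS
  have hU : ∀ J, ∃ j ≥ J, Uncov c j := by
    intro J
    have h1 : c (J * p) = true := by
      have := hper.map_mod_nat (J * p)
      rw [Nat.mul_mod_left, h0] at this
      exact this.symm
    obtain ⟨j, hj, hj'⟩ := exists_uncov hL hS h1
    exact ⟨j, (Nat.le_mul_of_pos_right J hp).trans hj, hj'⟩
  obtain ⟨j', hj'1, hj'⟩ := hU (2 * K + 2)
  obtain ⟨j, hj1, hj⟩ := hU (max J (j' + 1))
  have hJj : J ≤ j := (le_max_left _ _).trans hj1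
  have hjj : j' < j := (le_max_right J (j' + 1)).trans hj1
  let v : ℕ → Bool := fun i => if i % (j' + 1) = j' then false else c (i % (j' + 1))
  let e : ℕ → Bool := fun i => if i < j then c i else if i = j then false else v (i - (j + 1))
  have hv1 : ∀ i < j', v i = c i := fun i hi => by
    simp only [v]
    rw [Nat.mod_eq_of_lt (by omega), if_neg (by omega)]
  have hv2 : v j' = false := by
    simp only [v]
    rw [Nat.mod_eq_of_lt (by omega), if_pos rfl]
  have hv3 : ∀ i, v (j' + 1 + i) = v i := fun i => by
    simp only [v, Nat.add_mod_left]
  have he1 : ∀ i < j, e i = c i := fun i hi => by simp [e, hi]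
  have he2 : e j = false := by simp [e]
  have he3 : ∀ i, e (j + 1 + i) = v i := fun i => by
    simp [e, show ¬ (j + 1 + i < j) by omega, show ¬ (j + 1 + i = j) by omega]
  have hve : Lt v e := ⟨j', fun i hi => by rw [hv1 i hi, he1 i (by omega)], hv2, by
    rw [he1 j' hjj, hj'.1]⟩
  have htv : tl v j' = v := by ext i; simp [tl, hv2, hv3]
  have hte : tl e j = v := by ext i; simp [tl, he2, he3]
  have hv : ∀ s, Lt (tl v s) e := by
    intro s
    induction s using Nat.strong_induction_on with
    | _ s ih =>
      rcases lt_trichotomy s j' with h | h | h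
      · exact lt_of_uncov hL hK hj' (by omega) hv1 hv2
          (fun i hi => by rw [hv3, hv1 i (by omega)]) (fun i hi => he1 i (by omega)) h
      · rw [h, htv]; exact hve
      · obtain ⟨t, rfl⟩ : ∃ t, s = j' + 1 + t := ⟨s - (j' + 1), by omega⟩
        rw [← tl_tl, htv]
        exact ih t (by omega)
  refine ⟨e, fun i hi => he1 i (by omega), fun m => ?_⟩
  rcases lt_trichotomy m j with h | h | h
  · exact lt_of_uncov hL hK hj (by omega) he1 he2
      (fun i hi => by rw [he3, hv1 i (by omega)]) he1 h
  · rw [h, hte]; exact hve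
  · obtain ⟨t, rfl⟩ : ∃ t, m = j + 1 + t := ⟨m - (j + 1), by omega⟩
    rw [← tl_tl, hte]
    exact hv t

/-! ### Weakly admissible expansions of `1` outside the closure of `𝒰(1)` -/

lemma head_true {r : ℝ} (hr : 1 < r) {c : ℕ → Bool} (hc : WAdm r c) (h1 : val r c = 1) :
    c 0 = true := by
  by_contra h0
  simp only [Bool.not_eq_true] at h0
  have h := hc 0
  rw [tl_false h0] at h
  have e : (fun i => c (i + 1)) = sh (0 + 1) c :=
    funext fun i => congrArg c (by omega)
  rw [val_succ hr, h0, e, div_eq_one_iff_eq (by linarith)] at h1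
  simp at h1 h
  linarith

/-- If `1` has a weakly admissible expansion in a base `r < 2` outside the closure of `𝒰(1)`,
then this expansion is antiperiodic, that is of the form `(b b̄)^∞` with `b` ending in `1`. -/
lemma exists_antiperiodic {r : ℝ} (hr : 1 < r) (hr2 : r < 2) {c : ℕ → Bool} (hc : WAdm r c)
    (h1 : val r c = 1) (hcl : r ∉ closure (UnivSet 1)) : ∃ n, c n = true ∧ tl c n = c := by
  by_contra! hcon
  apply hcl
  have hL : ∀ m, ¬ Lt c (tl c m) := fun m =>
    not_lt_of_val_le hr hr2 (hc.tl m) hc (by rw [h1]; exact hc m)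
  have hS : ∀ m, c m = true → Lt (tl c m) c := fun m hm => by
    rcases lt_trichotomy' (tl c m) c with h | h | h
    · exact h
    · exact absurd h (hcon m hm)
    · exact absurd h (hL m)
  by_cases hA : ∀ m, tl c m ≠ c
  · refine subset_closure (mem_univSet_of_sAdm hr hr2.le (d := c) (fun m => ?_) h1)
    refine lt_of_le_of_ne (hc m) fun he => hA m ?_
    exact eq_of_val_eq hr hr2 (hc.tl m) hc (he.trans h1.symm)
  push Not at hA
  obtain ⟨n, hn⟩ := hA
  have hcn : c n = false := by
    by_contra h
    simp only [Bool.not_eq_false] at h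
    exact hcon n h hn
  have hper : Function.Periodic c (n + 1) := fun i => by
    have := congrFun hn i
    simp only [tl, hcn, Bool.false_xor] at this
    rw [add_comm]; exact this
  have hap := exists_approx (Nat.succ_pos n) hper (head_true hr hc h1) hL hS
  choose e he1 he2 using hap
  have hte : Tendsto e atTop (nhds c) := by
    refine tendsto_pi_nhds.2 fun i => ?_
    rw [nhds_discrete, tendsto_pure]
    filter_upwards [eventually_gt_atTop i] with J hJ using he1 J i hJ
  rw [Metric.mem_closure_iff]
  intro ε hε
  obtain ⟨a, ha1, ha2⟩ := exists_between (show max 1 (r - ε) < r by simp [hr, hε])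
  obtain ⟨b, hb1, hb2⟩ := exists_between (show r < min 2 (r + ε) by simp [hr2, hε])
  have ha3 := (le_max_left _ _).trans_lt ha1
  have ha4 := (le_max_right _ _).trans_lt ha1
  have hb3 := hb2.trans_le (min_le_left _ _)
  have hb4 := hb2.trans_le (min_le_right _ _)
  have hb5 : 1 < b := hr.trans hb1
  have hva : 1 < val a c := by rw [← h1]; exact val_strictAnti ha3 ha2 (by rw [h1]; norm_num)
  have hvb : val b c < 1 := by
    rcases (val_nonneg hb5 c).lt_or_eq with h | h
    · rw [← h1]; exact val_strictAnti hr hb1 h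
    · rw [← h]; norm_num
  obtain ⟨J, hJ1, hJ2⟩ := (((tendsto_val ha3 tendsto_const_nhds hte).eventually_const_lt hva).and
    ((tendsto_val hb5 tendsto_const_nhds hte).eventually_lt_const hvb)).exists
  obtain ⟨s, hs, hs1⟩ := exists_val_eq ha3 (ha2.trans hb1).le hJ1.le hJ2.le
  have hs0 : 1 < s := ha3.trans_le hs.1
  refine ⟨s, mem_univSet_of_sAdm hs0 (hs.2.trans hb3.le) (sAdm_of_lex hs0 hs1 (he2 J)) hs1, ?_⟩
  rw [Real.dist_eq, abs_lt]
  have := hs.1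
  have := hs.2
  constructor <;> linarith

/-! ### Local constancy of the admissible sequences -/

/-- Bases in which `1` has a weakly admissible expansion do not accumulate at a base outside the
closure of `𝒰(1)`. -/
lemma exists_isolating {q : ℝ} (hq : 1 < q) (hq2 : q < 2) (hcl : q ∉ closure (UnivSet 1)) :
    ∃ η > 0, ∀ r c, |r - q| < η → WAdm r c → val r c = 1 → r = q := by
  by_contra! hcon
  have h : ∀ k : ℕ, ∃ r c, |r - q| < 1 / ((k : ℝ) + 1) ∧ WAdm r c ∧ val r c = 1 ∧ r ≠ q :=
    fun k => hcon _ (by positivity)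
  choose r c h1 h2 h3 h4 using h
  have hr : Tendsto r atTop (nhds q) := by
    rw [tendsto_iff_norm_sub_tendsto_zero]
    exact squeeze_zero (fun _ => norm_nonneg _) (fun k => (h1 k).le)
      tendsto_one_div_add_atTop_nhds_zero_nat
  obtain ⟨d, φ, hφ, hd⟩ := CompactSpace.tendsto_subseq c
  have hrφ := hr.comp hφ.tendsto_atTop
  have hW : WAdm q d := wAdm_of_tendsto hq hrφ hd (Eventually.of_forall fun k => h2 _)
  have hv : val q d = 1 := by
    refine tendsto_nhds_unique (tendsto_val hq hrφ hd) ?_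
    refine tendsto_const_nhds.congr fun k => ?_
    exact (h3 (φ k)).symm
  obtain ⟨n, hn, ht⟩ := exists_antiperiodic hq hq2 hW hv hcl
  obtain ⟨k, ⟨hk1, hk2⟩, hk3⟩ := (((hrφ.eventually_const_lt hq).and
    (hrφ.eventually_lt_const hq2)).and (eventually_agree hd (2 * (n + 1)))).exists
  have he : c (φ k) = d := rigid_self hn ht (fun m => not_lt_of_val_le hk1 hk2
    ((h2 (φ k)).tl m) (h2 _) ((h2 (φ k) m).trans (h3 (φ k)).ge)) hk3
  refine h4 (φ k) (val_inj hk1 hq one_pos (h3 _) ?_)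
  rw [he]; exact hv

/-- If `d` is weakly admissible in base `p` but not strictly admissible in base `p' < p`, then in
some intermediate base `ρ` a limit of normalised tails of `d` is a weakly admissible expansion
of `1`. The base `ρ` is the least one in `[p', p]` in which `d` is weakly admissible. -/
lemma exists_critical {p p' : ℝ} (hp' : 1 < p') (hpp : p' ≤ p) {d : ℕ → Bool}
    (hW : WAdm p d) (hS : ¬ SAdm p' d) :
    ∃ ρ ∈ Icc p' p, ∃ t, WAdm ρ d ∧ WAdm ρ t ∧ val ρ t = 1 ∧
      ∀ N, ∃ m, ∀ i < N, tl d m i = t i := by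
  set A : Set ℝ := {r | r ∈ Icc p' p ∧ WAdm r d} with hA
  have hne : A.Nonempty := ⟨p, ⟨hpp, le_rfl⟩, hW⟩
  have hbd : BddBelow A := ⟨p', fun r hr => hr.1.1⟩
  have hcl : sInf A ∈ A := by
    obtain ⟨u, -, hu, huA⟩ := exists_seq_tendsto_sInf hne hbd
    have h1 : sInf A ∈ Icc p' p :=
      isClosed_Icc.mem_of_tendsto hu (Eventually.of_forall fun k => (huA k).1)
    exact ⟨h1, wAdm_of_tendsto (hp'.trans_le h1.1) hu tendsto_const_nhds
      (Eventually.of_forall fun k => (huA k).2)⟩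
  set ρ := sInf A with hρ
  obtain ⟨hρI, hρW⟩ := hcl
  have hρ1 : 1 < ρ := hp'.trans_le hρI.1
  refine ⟨ρ, hρI, ?_⟩
  rcases hρI.1.eq_or_lt with heq | hlt
  · rw [heq] at hS
    unfold SAdm at hS
    push Not at hS
    obtain ⟨m, hm⟩ := hS
    exact ⟨tl d m, hρW, hρW.tl m, le_antisymm (hρW m) hm, fun N => ⟨m, fun _ _ => rfl⟩⟩
  · obtain ⟨u, -, hu2, hu3⟩ := exists_seq_strictMono_tendsto' hlt
    have hnot : ∀ k, ∃ m, 1 < val (u k) (tl d m) := by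
      intro k
      by_contra! hcon
      have : ρ ≤ u k := csInf_le hbd ⟨⟨(hu2 k).1.le, (hu2 k).2.le.trans hρI.2⟩, hcon⟩
      exact absurd (hu2 k).2 (not_lt.2 this)
    choose m hm using hnot
    obtain ⟨t, φ, hφ, ht⟩ := CompactSpace.tendsto_subseq fun k => tl d (m k)
    have htW : WAdm ρ t := wAdm_of_tendsto hρ1 tendsto_const_nhds ht
      (Eventually.of_forall fun k => hρW.tl _)
    have h1 : 1 ≤ val ρ t := ge_of_tendsto' (tendsto_val hρ1 (hu3.comp hφ.tendsto_atTop) ht)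
      fun k => (hm (φ k)).le
    have h2 : val ρ t ≤ 1 := le_of_tendsto' (tendsto_val hρ1 tendsto_const_nhds ht)
      fun k => hρW _
    refine ⟨t, hρW, htW, le_antisymm h2 h1, fun N => ?_⟩
    obtain ⟨k, hk⟩ := (eventually_agree ht N).exists
    exact ⟨m (φ k), hk⟩

/-- Left of a base outside the closure of `𝒰(1)` no strictly admissible sequence is lost. -/
lemma sAdm_left {q η : ℝ} (hq2 : q < 2) (hcl : q ∉ closure (UnivSet 1))
    (hη : ∀ r c, |r - q| < η → WAdm r c → val r c = 1 → r = q) {p : ℝ} (hp : 1 < p)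
    (hpq : p ≤ q) (hpη : q - η < p) {d : ℕ → Bool} (hd : SAdm q d) : SAdm p d := by
  by_contra hS
  have hq : 1 < q := hp.trans_le hpq
  obtain ⟨ρ, hρ, t, -, htW, ht1, hag⟩ := exists_critical hp hpq hd.wAdm hS
  obtain rfl : ρ = q := hη ρ t (by rw [abs_lt]; constructor <;> linarith [hρ.1, hρ.2]) htW ht1
  obtain ⟨n, hn, ht⟩ := exists_antiperiodic hq hq2 htW ht1 hcl
  obtain ⟨m, hm⟩ := hag (n + 1)
  have := rigid_tail hn ht
    (not_lt_of_val_le hq hq2 (hd.wAdm.tl m) htW (by rw [ht1]; exact hd.wAdm m))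
    (by rw [tl_tl]; exact not_lt_of_val_le hq hq2 (hd.wAdm.tl _) htW
          (by rw [ht1]; exact hd.wAdm _)) hm
  have h := hd m
  rw [this, ht1] at h
  exact lt_irrefl _ h

/-- Suppose no other base within `η` of `q` has a weakly admissible expansion of `1`. Then sequences
strictly admissible in a base of `(q, q + η)` are weakly admissible in base `q`. -/
lemma wAdm_right {q η : ℝ} (hq : 1 < q)
    (hη : ∀ r c, |r - q| < η → WAdm r c → val r c = 1 → r = q) {p : ℝ} (hp : q < p)
    (hpη : p < q + η) {d : ℕ → Bool} (hd : SAdm p d) : WAdm q d := by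
  by_contra hW
  unfold WAdm at hW
  push Not at hW
  obtain ⟨m, hm⟩ := hW
  have ht : Tendsto (fun r => val r (tl d m)) (nhdsWithin q (Ioi q)) (nhds (val q (tl d m))) :=
    tendsto_val hq (tendsto_id.mono_left nhdsWithin_le_nhds) tendsto_const_nhds
  obtain ⟨p', h1, h2⟩ := ((ht.eventually_const_lt hm).and (Ioo_mem_nhdsGT hp)).exists
  obtain ⟨ρ, hρ, t, -, htW, ht1, -⟩ := exists_critical (hq.trans h2.1) h2.2.le hd.wAdm
    (fun hS => absurd (hS m) (not_lt.2 h1.le))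
  have := hη ρ t (by rw [abs_lt]; constructor <;> linarith [hρ.1, hρ.2, h2.1]) htW ht1
  linarith [hρ.1, h2.1]

/-! ### The level set -/

/-- Every `x ∈ L(q)` has a unique expansion in base `q`, i.e. the infimum defining `q_s(x)` is
attained, when `q` lies outside the closure of `𝒰(1)`. -/
lemma exists_sAdm_of_levelSet {q η : ℝ} (hq : 1 < q) (hq2 : q < 2)
    (hcl : q ∉ closure (UnivSet 1)) (hη0 : 0 < η)
    (hη : ∀ r c, |r - q| < η → WAdm r c → val r c = 1 → r = q) {x : ℝ} (hx : x ∈ levelSet q) :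
    ∃ d, SAdm q d ∧ val q d = x := by
  obtain ⟨hx0, hxq⟩ := hx
  by_contra hcon
  -- `sInf ∅ = 0`, so the set of bases is nonempty.
  have hne : (UnivSet x).Nonempty := by
    by_contra hemp
    rw [not_nonempty_iff_eq_empty] at hemp
    rw [qs, hemp, Real.sInf_empty] at hxq
    linarith
  have hbd : BddBelow (UnivSet x) := ⟨1, fun r hr => hr.1.1.le⟩
  obtain ⟨u, -, hu, huU⟩ := exists_seq_tendsto_sInf hne hbd
  rw [show sInf (UnivSet x) = q from hxq] at hu
  have hgt : ∀ k, q < u k := fun k => by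
    refine lt_of_le_of_ne ?_ fun he => hcon ?_
    · rw [← hxq]; exact csInf_le hbd (huU k)
    · rw [he]; exact exists_sAdm_of_mem (huU k)
  choose dk hdS hdv using fun k => exists_sAdm_of_mem (huU k)
  have hev : ∀ᶠ k in atTop, WAdm q (dk k) := by
    filter_upwards [hu.eventually_lt_const (show q < q + η by linarith)] with k hk
    exact wAdm_right hq hη (hgt k) hk (hdS k)
  obtain ⟨d, φ, hφ, hd⟩ := CompactSpace.tendsto_subseq dk
  have hevφ := hφ.tendsto_atTop.eventually hev
  have hW : WAdm q d := wAdm_of_tendsto hq tendsto_const_nhds hd hevφ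
  have hv : val q d = x := by
    refine tendsto_nhds_unique (tendsto_val hq (hu.comp hφ.tendsto_atTop) hd) ?_
    refine tendsto_const_nhds.congr fun k => ?_
    exact (hdv (φ k)).symm
  have hnS : ¬ SAdm q d := fun hS => hcon ⟨d, hS, hv⟩
  unfold SAdm at hnS
  push Not at hnS
  obtain ⟨m, hm⟩ := hnS
  have ht1 : val q (tl d m) = 1 := le_antisymm (hW m) hm
  obtain ⟨n, hn, ht⟩ := exists_antiperiodic hq hq2 (hW.tl m) ht1 hcl
  obtain ⟨k, hk1, hk2⟩ := (hevφ.and (eventually_agree hd (m + 1 + (n + 1)))).exists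
  set y := dk (φ k) with hy
  have hkk : ∀ i < m + 1 + (n + 1), y i = d i := hk2
  have hW' : WAdm q y := hk1
  have hm' : y m = d m := hkk m (by omega)
  have he : tl y m = tl d m := rigid_tail hn ht
    (not_lt_of_val_le hq hq2 (hW'.tl m) (hW.tl m) (by rw [ht1]; exact hW' m))
    (by rw [tl_tl]; exact not_lt_of_val_le hq hq2 (hW'.tl _) (hW.tl m)
          (by rw [ht1]; exact hW' _))
    (fun i hi => by simp only [tl]; rw [hm', hkk _ (by omega)])
  have hyd : y = d := by
    ext i
    rcases lt_or_ge i (m + 1) with hi | hi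
    · rw [hkk i (by omega)]
    · obtain ⟨j, rfl⟩ : ∃ j, i = m + 1 + j := ⟨i - (m + 1), by omega⟩
      have := congrFun he j
      simp only [tl, hm'] at this
      rw [Bool.xor_right_inj] at this
      rw [this]
  have h1 : val (u (φ k)) d = x := by rw [← hyd]; exact hdv (φ k)
  have := val_inj (hq.trans (hgt _)) hq hx0 h1 hv
  exact absurd this (ne_of_gt (hgt _))

/-- A sequence strictly admissible in base `p < q` cannot represent a point of `L(q)` in a base
of `[p, q)`. -/
lemma lt_of_levelSet {p q x : ℝ} (hp : 1 < p) (hpq : p < q) (hq2 : q < 2)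
    (hx : x ∈ levelSet q) {e : ℕ → Bool} (he : SAdm p e) (h1 : val q e < x) : val p e < x := by
  by_contra! h2
  obtain ⟨s, hs, hsx⟩ := exists_val_eq hp hpq.le h2 h1.le
  have hs1 : 1 < s := hp.trans_le hs.1
  have hsq : s < q := by
    refine lt_of_le_of_ne hs.2 fun h => ?_
    rw [h] at hsx; linarith
  have hmem : s ∈ UnivSet x :=
    mem_univSet_of_sAdm hs1 (by linarith) (he.mono hp hs.1) hsx
  have : qs x ≤ s := csInf_le ⟨1, fun r hr => hr.1.1.le⟩ hmem
  rw [hx.2] at this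
  linarith

/-- A bound on the number `m` of leading zeros of the expansion of a point of `L(q)`: if `m` were
large, prepending one more zero would represent the same point in a smaller base. -/
lemma ratio_pow_lt {p q x : ℝ} (hp : 1 < p) (hpq : p < q) (hq2 : q < 2)
    (hx : x ∈ levelSet q) {d : ℕ → Bool} (hd : SAdm p d) (hdx : val q d = x) {m : ℕ}
    (hm : ∀ i < m, d i = false) : (q / p) ^ m < p := by
  have hq : 1 < q := hp.trans hpq
  rcases Nat.eq_zero_or_pos m with rfl | hmpos
  · simpa using hp
  let e : ℕ → Bool := fun i => if i = 0 then false else d (i - 1)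
  have hes : (fun i => e (i + 1)) = d := by ext i; simp [e]
  have he0 : e 0 = false := by simp [e]
  have hte : tl e 0 = d := by
    rw [tl_false he0, ← hes]; ext i; simp [sh, add_comm]
  have hve {r : ℝ} (hr : 1 < r) : val r e = val r d / r := by
    rw [val_succ hr, hes, he0]; simp
  have hdp : val p d < 1 := by
    have h0 := hd 0
    rw [tl_false (hm 0 hmpos)] at h0
    have e1 : (fun i => d (i + 1)) = sh (0 + 1) d :=
      funext fun i => congrArg d (by omega)
    rw [val_succ hp, hm 0 hmpos, e1, div_lt_one (by linarith)]
    simp at h0 ⊢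
    linarith
  have heS : SAdm p e := fun k => by
    cases k with
    | zero => rw [hte]; exact hdp
    | succ k =>
      have := hd k
      rw [← hte, tl_tl] at this
      rwa [show k + 1 = 0 + 1 + k by ring]
  have h1 : val q e < x := by
    rw [hve hq, hdx]; exact div_lt_self hx.1 hq
  have h2 := lt_of_levelSet hp hpq hq2 hx heS h1
  rw [hve hp, div_lt_iff₀ (by linarith)] at h2
  have h3 := val_ratio hp hpq.le d m hm
  rw [hdx] at h3
  have h4 : (q / p) ^ m ≤ (q / p) ^ (m + 1) :=
    pow_le_pow_right₀ ((one_le_div (by linarith)).2 hpq.le) (by omega)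
  have hx0 := hx.1
  by_contra! hcon
  have : p * x ≤ (q / p) ^ (m + 1) * x := by gcongr; linarith
  linarith

/-- A bounded set of positive reals whose distinct points are at distance at least `δ` is
finite. -/
lemma finite_of_gap {S : Set ℝ} {δ B : ℝ} (hδ : 0 < δ) (h0 : ∀ x ∈ S, 0 < x) (hB : ∀ x ∈ S, x ≤ B)
    (hgap : ∀ x ∈ S, ∀ y ∈ S, x < y → x + δ ≤ y) : S.Finite := by
  refine Set.Finite.of_finite_image (f := fun x => ⌊x / δ⌋₊) ?_ ?_
  · refine (Set.finite_Iic ⌊B / δ⌋₊).subset ?_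
    rintro _ ⟨x, hx, rfl⟩
    exact Nat.floor_mono (div_le_div_of_nonneg_right (hB x hx) hδ.le)
  · have key : ∀ x ∈ S, ∀ y ∈ S, x < y → ⌊x / δ⌋₊ < ⌊y / δ⌋₊ := by
      intro x hx y hy hxy
      have h1 : x / δ + 1 ≤ y / δ := by
        rw [div_add_one hδ.ne']
        exact div_le_div_of_nonneg_right (hgap x hx y hy hxy) hδ.le
      have h2 : ⌊x / δ + 1⌋₊ = ⌊x / δ⌋₊ + 1 :=
        Nat.floor_add_one (div_nonneg (h0 x hx).le hδ.le)
      have := Nat.floor_mono h1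
      omega
    intro x hx y hy hxy
    rcases lt_trichotomy x y with h | h | h
    · exact absurd hxy (key x hx y hy h).ne
    · exact h
    · exact absurd hxy (key y hy x hx h).ne'

lemma two_mem : (2 : ℝ) ∈ UnivSet 1 := by
  have ht : ∀ m, tl (fun _ => true) m = fun _ => false := fun m => by ext i; simp [tl]
  refine mem_univSet_of_sAdm one_lt_two le_rfl (d := fun _ => true) (fun m => ?_) ?_
  · rw [ht]; simp [val]
  · have := tsum_geo (r := 2) one_lt_two
    simp only [val, Bool.toNat_true, Nat.cast_one]
    rw [this]; norm_num

/-- The case `q < 2`. Lowering the base from `q` to `p` multiplies every value by at least `q / p`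
without reaching another point of `L(q)`, so distinct points of `L(q)` have ratio at least
`q / p`. -/
theorem finite_levelSet {q : ℝ} (hq : 1 < q) (hq2 : q < 2) (hcl : q ∉ closure (UnivSet 1)) :
    (levelSet q).Finite := by
  obtain ⟨η, hη0, hη⟩ := exists_isolating hq hq2 hcl
  obtain ⟨p, hp1, hpq⟩ := exists_between (show max 1 (q - η) < q by simp [hq, hη0])
  have hp := (le_max_left _ _).trans_lt hp1
  have hpη := (le_max_right _ _).trans_lt hp1
  have hlam : 1 < q / p := (one_lt_div (by linarith)).2 hpq
  have hex : ∀ x ∈ levelSet q, ∃ d, SAdm p d ∧ val q d = x := fun x hx => by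
    obtain ⟨d, hd, hdx⟩ := exists_sAdm_of_levelSet hq hq2 hcl hη0 hη hx
    exact ⟨d, sAdm_left hq2 hcl hη hp hpq.le hpη hd, hdx⟩
  obtain ⟨M, hM⟩ := pow_unbounded_of_one_lt p hlam
  -- A positive lower bound: one of the first `M` digits is nonzero.
  have hlow : ∀ x ∈ levelSet q, 1 / q ^ M ≤ x := fun x hx => by
    obtain ⟨d, hd, hdx⟩ := hex x hx
    have h1 : ∃ i < M, d i = true := by
      by_contra! hcon
      have := ratio_pow_lt hp hpq hq2 hx hd hdx (m := M) (fun i hi => by simpa using hcon i hi)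
      linarith
    obtain ⟨i, hi, hdi⟩ := h1
    have h2 := (summable_val hq d).le_tsum i (fun j _ => term_nonneg hq d j)
    rw [← val, hdx, hdi] at h2
    have h3 : 1 / q ^ M ≤ 1 / q ^ (i + 1) :=
      one_div_le_one_div_of_le (by positivity) (pow_le_pow_right₀ hq.le (by omega))
    simp only [Bool.toNat_true, Nat.cast_one] at h2
    linarith
  refine finite_of_gap (δ := (q / p - 1) * (1 / q ^ M)) (B := 1 / (q - 1))
    (mul_pos (by linarith) (by positivity)) (fun x hx => hx.1) (fun x hx => ?_) ?_
  · obtain ⟨d, -, hdx⟩ := hex x hx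
    rw [← hdx]; exact val_le hq d
  · intro x hx y hy hxy
    obtain ⟨d, hd, hdx⟩ := hex x hx
    have h1 := lt_of_levelSet hp hpq hq2 hy hd (by rw [hdx]; exact hxy)
    have h2 := val_ratio hp hpq.le d 0 (by simp)
    rw [hdx, zero_add, pow_one] at h2
    have h3 := mul_le_mul_of_nonneg_left (hlow x hx) (by linarith : 0 ≤ q / p - 1)
    linarith

end LevelSet

/-- if `q ∈ (1,2]` is not in the closure of `𝒰(1)`, then the
level set `L(q)` is finite. -/
theorem levelSet_finite_of_not_mem_closure (q : ℝ) (hq : q ∈ Set.Ioc (1 : ℝ) 2)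
    (h : q ∉ closure (UnivSet 1)) : (levelSet q).Finite := by
  refine LevelSet.finite_levelSet hq.1 (lt_of_le_of_ne hq.2 fun h2 => h ?_) h
  rw [h2]
  exact subset_closure LevelSet.two_mem
end
end

section
/- Let k ≥ 1 be an integer, let x satisfy q_G^{-k} ≤ x < q_G^{-k+1}, and let q ∈ (1,2) satisfy q^k (q − 1) = 1/x. Then: (i) q > q_G and q ∉ 𝒰(x); (ii) q_s(x) ≥ q, and moreover q_s(x) = q if and only if q belongs to the closure 𝒰̄ of 𝒰(1) in ℝ. -/
/-!
Write `val q c` for the number represented by the binary sequence `c` in base `q`. A sequence is a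
unique expansion exactly when every tail following a digit `0` has value below `1` and every
reflected tail following a digit `1` has value below `1` (`Adm`, `mem_univSet_iff`). Values decrease
in `q`, so `Adm q c` passes to larger bases.

*Lower bound.* If `p ∈ 𝒰(x)` and `p^k x ≤ 1/(p-1)`, then for some `j ≥ k` we have
`1 ≤ p^j x ≤ 1/(p-1)`; the tails of the expansion force its first `j` digits to vanish, and
then a digit `0` is followed by a tail of value at least `1` (`univ_bound`). Hence `p^k (p-1) x > 1`
on `𝒰(x)`, that is, `p > q`.

*Reduction to numbers near `1`.* For `p` slightly above `q`, the expansion of `x` has to begin with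
`0^{k-1}1`, and reflecting the rest shows that `p ∈ 𝒰(x)` iff `1 - ε(p)` has a unique expansion in
base `p`, where `ε(p) = p^k x - 1/(p-1)` is positive and tends to `0` as `p` decreases to `q`
(`mem_univ_iff_reflected`). So `q_s(x) = q` iff such `p` exist arbitrarily close to `q`.

*Necessity.* Given such `p`, compactness yields a limit `d` of the expansions: an expansion of `1`
in base `q` none of whose tails or reflected tails exceeds `1` (`Weak`, `exists_weak_limit`). There
is only one such sequence in base `q`, so if it is not a unique expansion then it is periodic or
antiperiodic. The antiperiodic case is impossible because `1 - ε(p)` decreases too fast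
(`not_antiperiodic`). In the periodic case, many periods of `d` followed by a suitable sequence are
the unique expansions of `1` in bases just below `q` (`exists_univ_left`).

*Sufficiency.* It is enough to find numbers just below `1` having unique expansions `c` in base `q`
itself: these stay unique in larger bases, and `val t c = 1 - ε(t)` is solved by the intermediate
value theorem (`exists_univ_right`). For `q ∈ 𝒰` with `1 = val q d` they are antiperiodic
sequences built from a prefix of `d`, cut off where the normalised distance of the reflected tail
from `1` reaches a record minimum (`exists_antiperiodic`). If `q ∈ 𝒰̄ \ 𝒰`, then `q` is not a limit
of `𝒰` from the right (`mem_univ_of_right`), so there are `r ∈ 𝒰` increasing to `q`, and the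
expansions of `1` in the bases `r` do the job (`exists_adm_near_one`).
-/

open Filter Set

noncomputable section

/-! ### Values of binary sequences -/

/-- The real value `0` or `1` of a binary digit. -/
def dig (b : Bool) : ℝ := if b then 1 else 0

/-- The number `∑ c_i q^{-(i+1)}` represented by the binary sequence `c` in base `q`. -/
def val (q : ℝ) (c : ℕ → Bool) : ℝ := ∑' i : ℕ, dig (c i) / q ^ (i + 1)

/-- The shifted sequence, with the first `n` digits deleted. -/
def sh (n : ℕ) (c : ℕ → Bool) : ℕ → Bool := fun i => c (n + i)

/-- The reflection of a sequence, exchanging the digits `0` and `1`. -/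
def cj (c : ℕ → Bool) : ℕ → Bool := fun i => !c i

/-- The first `m` digits of `c` followed by the sequence `t`. -/
def glue (m : ℕ) (c t : ℕ → Bool) : ℕ → Bool := fun i => if i < m then c i else t (i - m)

/-- The condition on the tails of `c` that says that no digit of `c` can be exchanged in base `q`;
it characterises unique expansions (`mem_univSet_iff`). -/
def Adm (q : ℝ) (c : ℕ → Bool) : Prop :=
  ∀ n, (c n = false → val q (sh (n + 1) c) < 1) ∧ (c n = true → val q (sh (n + 1) (cj c)) < 1)

@[simp] lemma dig_true : dig true = 1 := by simp [dig]
@[simp] lemma dig_false : dig false = 0 := by simp [dig]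

lemma dig_nonneg (b : Bool) : 0 ≤ dig b := by cases b <;> simp
lemma dig_le_one (b : Bool) : dig b ≤ 1 := by cases b <;> simp
lemma dig_not (b : Bool) : dig (!b) = 1 - dig b := by cases b <;> simp

@[simp] lemma sh_zero (c : ℕ → Bool) : sh 0 c = c := by ext i; simp [sh]
lemma sh_sh (m n : ℕ) (c : ℕ → Bool) : sh m (sh n c) = sh (n + m) c := by
  ext i; simp [sh, add_assoc]
@[simp] lemma cj_cj (c : ℕ → Bool) : cj (cj c) = c := by ext i; simp [cj]
lemma sh_cj (n : ℕ) (c : ℕ → Bool) : sh n (cj c) = cj (sh n c) := rfl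
lemma sh_glue (m : ℕ) (c t : ℕ → Bool) : sh m (glue m c t) = t := by
  ext i; simp [sh, glue]
lemma sh_add_glue (m i : ℕ) (c t : ℕ → Bool) : sh (m + i) (glue m c t) = sh i t := by
  rw [← sh_sh, sh_glue]
lemma glue_of_lt {m i : ℕ} (h : i < m) (c t : ℕ → Bool) : glue m c t i = c i := by
  simp [glue, h]
lemma glue_add (m i : ℕ) (c t : ℕ → Bool) : glue m c t (m + i) = t i := by
  simp [glue]

lemma hasSum_geom {q : ℝ} (hq : 1 < q) : HasSum (fun i : ℕ => 1 / q ^ (i + 1)) (1 / (q - 1)) := by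
  have h := (hasSum_geometric_of_lt_one (r := q⁻¹) (by positivity) (inv_lt_one_of_one_lt₀ hq)).mul_left q⁻¹
  have h0 : q ≠ 0 := by positivity
  have e1 : (fun i : ℕ => 1 / q ^ (i + 1)) = fun i => q⁻¹ * q⁻¹ ^ i := by
    funext i; rw [← pow_succ', inv_pow, one_div]
  have e2 : 1 / (q - 1) = q⁻¹ * (1 - q⁻¹)⁻¹ := by
    rw [← mul_inv, mul_sub, mul_inv_cancel₀ h0, mul_one, one_div]
  rw [e1, e2]; exact h

lemma summable_val {q : ℝ} (hq : 1 < q) (c : ℕ → Bool) :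
    Summable (fun i : ℕ => dig (c i) / q ^ (i + 1)) := by
  refine Summable.of_nonneg_of_le (fun i => ?_) (fun i => ?_) (hasSum_geom hq).summable
  · have := dig_nonneg (c i); positivity
  · have := dig_le_one (c i); gcongr

lemma val_nonneg {q : ℝ} (hq : 1 < q) (c : ℕ → Bool) : 0 ≤ val q c :=
  tsum_nonneg fun i => by have := dig_nonneg (c i); positivity

lemma val_cj {q : ℝ} (hq : 1 < q) (c : ℕ → Bool) : val q (cj c) = 1 / (q - 1) - val q c := by
  unfold val
  rw [← (hasSum_geom hq).tsum_eq, ← (hasSum_geom hq).summable.tsum_sub (summable_val hq c)]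
  congr 1; ext i
  rw [cj, dig_not]; ring

lemma val_le {q : ℝ} (hq : 1 < q) (c : ℕ → Bool) : val q c ≤ 1 / (q - 1) := by
  have := val_nonneg hq (cj c)
  rw [val_cj hq] at this; linarith

lemma val_step {q : ℝ} (hq : 1 < q) (c : ℕ → Bool) (n : ℕ) :
    val q (sh (n + 1) c) = q * val q (sh n c) - dig (c n) := by
  have h0 : q ≠ 0 := by positivity
  have : val q (sh n c) = dig (c n) / q + val q (sh (n + 1) c) / q := by
    unfold val
    rw [(summable_val hq (sh n c)).tsum_eq_zero_add, ← tsum_div_const]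
    congr 1
    · simp [sh]
    · congr 1; ext i
      have : sh n c (i + 1) = sh (n + 1) c i := by simp only [sh]; congr 1; ring
      rw [this, pow_succ _ (i + 1), div_div]
  rw [this]; field_simp; ring

/-- Two sequences with a common prefix of length `N`: their values differ by `q^{-N}` times the
difference of the values of the remaining tails. -/
lemma val_agree {q : ℝ} (hq : 1 < q) (c d : ℕ → Bool) (N : ℕ) (h : ∀ i < N, c i = d i) :
    val q (sh N c) - val q (sh N d) = q ^ N * (val q c - val q d) := by
  induction N with
  | zero => simp
  | succ n ih =>
    have := ih fun i hi => h i (by omega)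
    rw [val_step hq, val_step hq, h n (by omega), pow_succ]
    linear_combination q * this

lemma val_anti {s p : ℝ} (hs : 1 < s) (hsp : s ≤ p) (c : ℕ → Bool) : val p c ≤ val s c := by
  refine (summable_val (by linarith) c).tsum_le_tsum (fun i => ?_) (summable_val hs c)
  have := dig_nonneg (c i); gcongr

lemma val_lip {s p : ℝ} (hs : 1 < s) (hsp : s ≤ p) (c : ℕ → Bool) :
    val s c - val p c ≤ 1 / (s - 1) - 1 / (p - 1) := by
  have := val_anti hs hsp (cj c)
  rw [val_cj hs, val_cj (by linarith)] at this; linarith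

lemma val_strictAnti {s p : ℝ} (hs : 1 < s) (hsp : s < p) (c : ℕ → Bool) (h : 0 < val p c) :
    val p c < val s c := by
  have : ∃ i, c i = true := by
    by_contra! hc
    have : c = fun _ => false := by ext i; simpa using hc i
    simp [val, this] at h
  obtain ⟨j, hj⟩ := this
  refine (summable_val (by linarith) c).tsum_lt_tsum (i := j) (fun i => ?_) ?_ (summable_val hs c)
  · have := dig_nonneg (c i); gcongr
  · simp only [hj, dig_true]
    gcongr

lemma le_val {q : ℝ} (hq : 1 < q) (c : ℕ → Bool) (j : ℕ) (h : c j = true) :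
    1 / q ^ (j + 1) ≤ val q c := by
  have := (summable_val hq c).le_tsum j fun i _ => by have := dig_nonneg (c i); positivity
  simpa [h, val] using this

lemma continuous_val {q : ℝ} (hq : 1 < q) : Continuous (val q) := by
  refine continuous_tsum (u := fun i : ℕ => 1 / q ^ (i + 1)) (fun i => ?_) (hasSum_geom hq).summable
    (fun i c => ?_)
  · exact ((continuous_of_discreteTopology (f := dig)).comp (continuous_apply i)).div_const _
  · have h0 := dig_nonneg (c i)
    have := dig_le_one (c i)
    rw [Real.norm_of_nonneg (by positivity)]; gcongr

lemma abs_val_sub {s p : ℝ} (hs : 1 < s) (hp : 1 < p) (c : ℕ → Bool) :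
    |val s c - val p c| ≤ |1 / (s - 1) - 1 / (p - 1)| := by
  rcases le_total s p with h | h
  · have h1 := val_anti hs h c
    rw [abs_of_nonneg (by linarith)]
    exact (val_lip hs h c).trans (le_abs_self _)
  · have h1 := val_anti hp h c
    rw [abs_sub_comm, abs_of_nonneg (by linarith), abs_sub_comm]
    exact (val_lip hp h c).trans (le_abs_self _)

lemma tendsto_base {ι : Type*} {l : Filter ι} {p : ι → ℝ} {q : ℝ} (hq : 1 < q)
    (hp : Tendsto p l (nhds q)) :
    Tendsto (fun i => 1 / (p i - 1)) l (nhds (1 / (q - 1))) :=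
  tendsto_const_nhds.div (hp.sub_const 1) (by linarith)

lemma tendsto_val {ι : Type*} {l : Filter ι} {p : ι → ℝ} {q : ℝ} {c : ι → ℕ → Bool} {d : ℕ → Bool}
    (hq : 1 < q) (hp : Tendsto p l (nhds q)) (hc : Tendsto c l (nhds d)) :
    Tendsto (fun i => val (p i) (c i)) l (nhds (val q d)) := by
  have h1 : Tendsto (fun i => val q (c i)) l (nhds (val q d)) :=
    ((continuous_val hq).tendsto d).comp hc
  have h2 : Tendsto (fun i => val (p i) (c i) - val q (c i)) l (nhds 0) := by
    have h3 : Tendsto (fun i => |1 / (p i - 1) - 1 / (q - 1)|) l (nhds 0) := by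
      have := ((tendsto_base hq hp).sub_const (1 / (q - 1))).abs
      simpa using this
    refine squeeze_zero_norm' ?_ h3
    filter_upwards [hp.eventually_const_lt hq] with i hi
    exact abs_val_sub hi hq _
  simpa using h2.add h1

lemma continuousOn_val (c : ℕ → Bool) : ContinuousOn (fun s => val s c) (Ioi 1) := fun _ hq =>
  (tendsto_val hq tendsto_id tendsto_const_nhds).mono_left nhdsWithin_le_nhds

/-! ### Characterisation of unique expansions -/

/-- Every number of `[0, 1/(q-1)]` has an expansion in base `q ∈ (1,2]`, given by the greedy
algorithm. -/
lemma exists_val {q : ℝ} (hq : 1 < q) (hq2 : q ≤ 2) {y : ℝ} (h0 : 0 ≤ y) (h1 : y ≤ 1 / (q - 1)) :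
    ∃ c, val q c = y := by
  classical
  let r : ℕ → ℝ := fun n => Nat.rec y (fun _ z => if 1 ≤ q * z then q * z - 1 else q * z) n
  let c : ℕ → Bool := fun n => decide (1 ≤ q * r n)
  have hr : ∀ n, r (n + 1) = q * r n - dig (c n) := by
    intro n
    change (if 1 ≤ q * r n then q * r n - 1 else q * r n) = _
    by_cases h : 1 ≤ q * r n <;> simp [c, h]
  have hb : ∀ n, 0 ≤ r n ∧ r n ≤ 1 / (q - 1) := by
    have hq1 : 0 < q - 1 := by linarith
    have hq3 : 1 ≤ 1 / (q - 1) := by rw [le_div_iff₀ hq1]; linarith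
    intro n
    induction n with
    | zero => exact ⟨h0, h1⟩
    | succ n ih =>
      rw [hr]
      by_cases h : 1 ≤ q * r n
      · have : q * r n ≤ q * (1 / (q - 1)) := by gcongr; exact ih.2
        have h5 : q * (1 / (q - 1)) = 1 + 1 / (q - 1) := by field_simp; ring
        simp only [c, h, decide_true, dig_true]
        constructor <;> linarith
      · simp only [c, h, decide_false, dig_false]
        have := ih.1
        push Not at h
        constructor
        · have : 0 ≤ q * r n := by positivity
          linarith
        · linarith
  have he : ∀ n, r n - val q (sh n c) = q ^ n * (y - val q c) := by
    intro n
    induction n with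
    | zero => simp [r]
    | succ n ih => rw [hr, val_step hq, pow_succ]; linear_combination q * ih
  refine ⟨c, ?_⟩
  by_contra hne
  have hpos : 0 < |y - val q c| := abs_pos.2 (sub_ne_zero.2 (Ne.symm hne))
  obtain ⟨n, hn⟩ := pow_unbounded_of_one_lt (1 / (q - 1) / |y - val q c|) hq
  rw [div_lt_iff₀ hpos] at hn
  have h5 : |r n - val q (sh n c)| ≤ 1 / (q - 1) := by
    have := hb n
    have h6 := val_nonneg hq (sh n c)
    have h7 := val_le hq (sh n c)
    rw [abs_le]; constructor <;> linarith
  rw [he, abs_mul, abs_of_pos (by positivity)] at h5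
  linarith

lemma Adm.cj {q : ℝ} {c : ℕ → Bool} (h : Adm q c) : Adm q (cj c) := by
  intro n
  refine ⟨fun hn => (h n).2 (by simpa [_root_.cj] using hn), fun hn => ?_⟩
  rw [cj_cj]
  exact (h n).1 (by simpa [_root_.cj] using hn)

lemma Adm.sh {q : ℝ} {c : ℕ → Bool} (h : Adm q c) (m : ℕ) : Adm q (sh m c) := by
  intro n
  rw [← sh_cj, sh_sh, sh_sh]
  exact h (m + n)

lemma Adm.mono {s p : ℝ} (hs : 1 < s) (hsp : s ≤ p) {c : ℕ → Bool} (h : Adm s c) : Adm p c :=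
  fun n => ⟨fun hn => (val_anti hs hsp _).trans_lt ((h n).1 hn),
    fun hn => (val_anti hs hsp _).trans_lt ((h n).2 hn)⟩

lemma Adm.unique {q : ℝ} (hq : 1 < q) {c d : ℕ → Bool} (h : Adm q c) (hv : val q d = val q c) :
    d = c := by
  classical
  by_contra hne
  have hex : ∃ i, d i ≠ c i := by
    by_contra! hc; exact hne (funext hc)
  have hN := Nat.find_spec hex
  have hlt : ∀ i < Nat.find hex, d i = c i := fun i hi => by
    simpa using Nat.find_min hex hi
  generalize Nat.find hex = N at hN hlt
  have h1 := val_agree hq d c N hlt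
  rw [hv, sub_self, mul_zero] at h1
  have h2 := val_step hq d N
  have h3 := val_step hq c N
  have h4 := val_nonneg hq (_root_.sh (N + 1) d)
  have h5 := val_le hq (_root_.sh (N + 1) d)
  cases hc : c N with
  | false =>
    have hd : d N = true := by simpa [hc] using hN
    have h6 := (h N).1 hc
    simp only [hc, hd, dig_true, dig_false] at h2 h3
    have : q * (val q (_root_.sh N d) - val q (_root_.sh N c)) = 0 := by rw [h1, mul_zero]
    linarith
  | true =>
    have hd : d N = false := by simpa [hc] using hN
    have h6 := (h N).2 hc
    rw [sh_cj, val_cj hq] at h6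
    simp only [hc, hd, dig_true, dig_false] at h2 h3
    have : q * (val q (_root_.sh N d) - val q (_root_.sh N c)) = 0 := by rw [h1, mul_zero]
    linarith

/-- If a tail following a digit `0` has value at least `1`, that digit can be raised to `1`. -/
lemma exists_ne_of_false {q : ℝ} (hq : 1 < q) (hq2 : q ≤ 2) {c : ℕ → Bool} {n : ℕ}
    (hn : c n = false) (h : 1 ≤ val q (sh (n + 1) c)) : ∃ d, val q d = val q c ∧ d ≠ c := by
  have h1 := val_le hq (sh (n + 1) c)
  obtain ⟨e, he⟩ := exists_val hq hq2 (y := val q (sh (n + 1) c) - 1) (by linarith) (by linarith)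
  let f : ℕ → Bool := glue 1 (fun _ => true) e
  have hf0 : f 0 = true := by simp [f, glue]
  have hf := val_step hq f 0
  have hf1 : sh (0 + 1) f = e := by rw [zero_add]; exact sh_glue 1 _ e
  rw [hf1, sh_zero, hf0, he] at hf
  have h2 := val_step hq c n
  rw [hn] at h2
  refine ⟨glue n c f, ?_, fun hc => ?_⟩
  · have h3 := val_agree hq (glue n c f) c n fun i hi => glue_of_lt hi c f
    rw [sh_glue] at h3
    have h4 : q * (val q f - val q (sh n c)) = 0 := by simp at hf h2; linarith
    have h5 : val q f - val q (sh n c) = 0 := by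
      rcases mul_eq_zero.1 h4 with h | h
      · linarith
      · exact h
    rw [h5] at h3
    have := mul_eq_zero.1 h3.symm
    rcases this with h | h
    · have : q ^ n ≠ 0 := by positivity
      exact absurd h this
    · linarith
  · have h3 := glue_add n 0 c f
    rw [hc, hf0, add_zero, hn] at h3
    exact absurd h3 (by simp)

lemma adm_of_unique {q : ℝ} (hq : 1 < q) (hq2 : q ≤ 2) {c : ℕ → Bool}
    (h : ∀ d, val q d = val q c → d = c) : Adm q c := by
  intro n
  constructor <;> intro hn <;> by_contra! hv
  · obtain ⟨d, h1, h2⟩ := exists_ne_of_false hq hq2 hn hv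
    exact h2 (h d h1)
  · obtain ⟨d, h1, h2⟩ := exists_ne_of_false hq hq2 (c := cj c) (n := n) (by simp [cj, hn]) hv
    have h3 : val q (cj d) = val q c := by
      rw [val_cj hq] at h1 ⊢; linarith
    apply h2
    rw [← h _ h3, cj_cj]

lemma mem_univSet_iff {q x : ℝ} :
    q ∈ UnivSet x ↔ q ∈ Ioc (1 : ℝ) 2 ∧ ∃ c, val q c = x ∧ Adm q c := by
  have key : ∀ d : ℕ → ℕ, (∀ i, d i ≤ 1) →
      (∑' i : ℕ, (d i : ℝ) / q ^ (i + 1)) = val q (fun i => decide (d i = 1)) := by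
    intro d hd
    unfold val
    congr 1; ext i
    have := hd i
    interval_cases hdi : d i <;> simp [hdi]
  have key2 : ∀ c : ℕ → Bool, (fun i => decide ((c i).toNat = 1)) = c := by
    intro c; ext i; cases c i <;> simp
  unfold UnivSet
  simp only [mem_ofPred_eq]
  refine and_congr_right fun hq => ⟨?_, ?_⟩
  · rintro ⟨d, ⟨hd, hx⟩, hu⟩
    rw [key d hd] at hx
    refine ⟨_, hx.symm, adm_of_unique hq.1 hq.2 fun e he => ?_⟩
    have h1 := hu (fun i => (e i).toNat) ⟨fun i => Bool.toNat_le (e i), by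
      rw [key _ fun i => Bool.toNat_le (e i), key2, he, hx]⟩
    rw [← h1, key2]
  · rintro ⟨c, hx, hc⟩
    refine ⟨fun i => (c i).toNat, ⟨fun i => Bool.toNat_le (c i), by
      rw [key _ fun i => Bool.toNat_le (c i), key2, hx]⟩, ?_⟩
    rintro d ⟨hd, hdx⟩
    rw [key d hd, ← hx] at hdx
    have h1 := hc.unique hq.1 hdx.symm
    ext i
    rw [← h1]
    have := hd i
    interval_cases hdi : d i <;> simp [hdi]

/-! ### Weak expansions of `1` and limits from the right -/

lemma Adm.tails_lt {q : ℝ} (hq : 1 < q) (hq2 : q ≤ 2) {c : ℕ → Bool} (h : Adm q c)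
    (h0 : val q c < 1) (i : ℕ) : val q (_root_.sh i c) < 1 := by
  induction i with
  | zero => simpa using h0
  | succ n ih =>
    cases hn : c n with
    | false => exact (h n).1 hn
    | true =>
      rw [val_step hq, hn, dig_true]
      have := val_nonneg hq (_root_.sh n c)
      nlinarith

/-- `d` is an expansion of `1` in base `q` such that no tail of `d` or of its reflection has value
above `1`. This is the closed condition satisfied by limits of unique expansions. -/
def Weak (q : ℝ) (d : ℕ → Bool) : Prop :=
  val q d = 1 ∧ ∀ i, val q (sh i d) ≤ 1 ∧ val q (sh i (cj d)) ≤ 1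

/-- In bases `3/2 < q < 2` the proper tails of the unique expansion of `1`, and the tails
of its reflection, have values below `1`; only the whole sequence has value `1`. -/
lemma tails_of_univ {q : ℝ} (hq : 3 / 2 < q) (hq2 : q < 2) {c : ℕ → Bool} (h : Adm q c)
    (h1 : val q c = 1) :
    (∀ i, 1 ≤ i → val q (sh i c) < 1) ∧ ∀ i, val q (sh i (cj c)) < 1 := by
  have hq1 : 1 < q := by linarith
  constructor
  · intro i hi
    have h2 : val q (sh 1 c) < 1 := by
      cases h0 : c 0 with
      | false => exact (h 0).1 h0
      | true =>
        have := val_step hq1 c 0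
        rw [h0, sh_zero, h1, dig_true] at this
        rw [zero_add] at this
        linarith
    have := (h.sh 1).tails_lt hq1 hq2.le h2 (i - 1)
    rwa [sh_sh, show 1 + (i - 1) = i by omega] at this
  · refine h.cj.tails_lt hq1 hq2.le ?_
    rw [val_cj hq1, h1]
    have : 1 / (q - 1) < 2 := by rw [div_lt_iff₀ (by linarith)]; linarith
    linarith

lemma adm_of_tails {q : ℝ} {d : ℕ → Bool}
    (h : ∀ i, 1 ≤ i → val q (sh i d) < 1 ∧ val q (sh i (cj d)) < 1) : Adm q d :=
  fun n => ⟨fun _ => (h (n + 1) (by omega)).1, fun _ => (h (n + 1) (by omega)).2⟩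

/-- Compactness: expansions of numbers tending to `1`, in bases decreasing to `q` and with all
tails of value at most `1`, accumulate at a sequence with `Weak q d`, and a property `R` of the
approximating pairs holds for pairs sharing arbitrarily long prefixes with `d`. -/
lemma exists_weak_limit {q : ℝ} (hq : 1 < q) (R : ℝ → (ℕ → Bool) → Prop)
    (h : ∀ δ > 0, ∃ p, q < p ∧ p < q + δ ∧ ∃ c, |val p c - 1| < δ ∧
      (∀ i, val p (sh i c) ≤ 1 ∧ val p (sh i (cj c)) ≤ 1) ∧ R p c) :
    ∃ d, Weak q d ∧ ∀ N, ∀ δ > 0, ∃ p, q < p ∧ p < q + δ ∧ ∃ c, (∀ i < N, c i = d i) ∧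
      (∀ i, val p (sh i c) ≤ 1 ∧ val p (sh i (cj c)) ≤ 1) ∧ R p c := by
  choose p hp1 hp2 c hc1 hc2 hc3 using fun n : ℕ => h (1 / (n + 1 : ℝ)) (by positivity)
  obtain ⟨d, φ, hφ, hd⟩ := CompactSpace.tendsto_subseq c
  have hlim : Tendsto (fun n => 1 / ((φ n : ℕ) + 1 : ℝ)) atTop (nhds 0) :=
    tendsto_one_div_add_atTop_nhds_zero_nat.comp hφ.tendsto_atTop
  have hp : Tendsto (fun n => p (φ n)) atTop (nhds q) := by
    refine tendsto_of_tendsto_of_tendsto_of_le_of_le tendsto_const_nhds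
      (h := fun n => q + 1 / ((φ n : ℕ) + 1 : ℝ)) ?_ (fun n => (hp1 _).le) (fun n => (hp2 _).le)
    simpa using hlim.const_add q
  have hcoord : ∀ i, ∀ᶠ n in atTop, c (φ n) i = d i := by
    intro i
    have := (tendsto_pi_nhds.1 hd) i
    rw [nhds_discrete, tendsto_pure] at this
    exact this
  have hsh : ∀ i, Tendsto (fun n => sh i (c (φ n))) atTop (nhds (sh i d)) := by
    intro i
    rw [tendsto_pi_nhds]
    intro j
    exact (tendsto_pi_nhds.1 hd) (i + j)
  have hcj : ∀ i, Tendsto (fun n => sh i (cj (c (φ n)))) atTop (nhds (sh i (cj d))) := by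
    intro i
    rw [tendsto_pi_nhds]
    intro j
    rw [nhds_discrete, tendsto_pure]
    filter_upwards [hcoord (i + j)] with n hn
    simp [sh, cj, hn]
  refine ⟨d, ⟨?_, fun i => ⟨?_, ?_⟩⟩, ?_⟩
  · have h1 := tendsto_val hq hp hd
    have h2 : Tendsto (fun n => val (p (φ n)) (c (φ n)) - 1) atTop (nhds 0) :=
      squeeze_zero_norm (fun n => (hc1 (φ n)).le) hlim
    have := tendsto_nhds_unique h2 (h1.sub_const 1)
    linarith
  · exact le_of_tendsto' (tendsto_val hq hp (hsh i)) fun n => (hc2 _ i).1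
  · exact le_of_tendsto' (tendsto_val hq hp (hcj i)) fun n => (hc2 _ i).2
  · intro N δ hδ
    have h1 : ∀ᶠ n in atTop, ∀ i ∈ Finset.range N, c (φ n) i = d i :=
      (Finset.eventually_all _).2 fun i _ => hcoord i
    obtain ⟨n, hn1, hn2⟩ := (h1.and (hp.eventually_lt_const (show q < q + δ by linarith))).exists
    exact ⟨p (φ n), hp1 _, hn2, c (φ n), fun i hi => hn1 i (Finset.mem_range.2 hi), hc2 _, hc3 _⟩

/-- A base has at most one weak expansion of `1`: at the first digit where two of them differ, one
continues as `0` followed by a tail of value `1` and the other as `10^∞`, whose reflection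
has a tail of value `1/(q-1) > 1`. -/
lemma Weak.unique {q : ℝ} (hq : 1 < q) (hq2 : q < 2) {d e : ℕ → Bool} (hd : Weak q d)
    (he : Weak q e) : d = e := by
  have key : ∀ a b : ℕ → Bool, Weak q a → Weak q b → ∀ n, (∀ i < n, a i = b i) →
      a n = false → b n = true → False := by
    intro a b ha hb n hn han hbn
    have h1 := val_agree hq a b n hn
    rw [ha.1, hb.1, sub_self, mul_zero] at h1
    have h2 := val_step hq a n
    have h3 := val_step hq b n
    rw [han, dig_false] at h2
    rw [hbn, dig_true] at h3
    have h4 := (ha.2 (n + 1)).1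
    have h5 := (hb.2 (n + 1)).2
    rw [sh_cj, val_cj hq] at h5
    have h6 : 1 < 1 / (q - 1) := by rw [lt_div_iff₀ (by linarith)]; linarith
    have h7 : q * (val q (sh n a) - val q (sh n b)) = 0 := by rw [h1, mul_zero]
    linarith
  funext n
  induction n using Nat.strong_induction_on with
  | _ n ih =>
    cases ha : d n <;> cases hb : e n
    · rfl
    · exact (key d e hd he n ih ha hb).elim
    · exact (key e d he hd n (fun i hi => (ih i hi).symm) hb ha).elim
    · rfl

lemma Weak.sh_eq {q : ℝ} (hq : 1 < q) (hq2 : q < 2) {d : ℕ → Bool} (hd : Weak q d) {n : ℕ}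
    (h : val q (sh n d) = 1) : sh n d = d := by
  refine Weak.unique hq hq2 ⟨h, fun i => ?_⟩ hd
  rw [← sh_cj, sh_sh, sh_sh]
  exact hd.2 _

lemma Weak.sh_cj_eq {q : ℝ} (hq : 1 < q) (hq2 : q < 2) {d : ℕ → Bool} (hd : Weak q d) {n : ℕ}
    (h : val q (sh n (cj d)) = 1) : sh n (cj d) = d := by
  refine Weak.unique hq hq2 ⟨h, fun i => ?_⟩ hd
  rw [← sh_cj, sh_sh, sh_sh, cj_cj]
  exact (hd.2 _).symm

lemma Weak.exists_eq {q : ℝ} {d : ℕ → Bool} (hd : Weak q d) (h : ¬ Adm q d) :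
    ∃ n, 1 ≤ n ∧ (val q (sh n d) = 1 ∨ val q (sh n (cj d)) = 1) := by
  by_contra! hc
  exact h (adm_of_tails fun i hi => ⟨lt_of_le_of_ne (hd.2 i).1 (hc i hi).1,
    lt_of_le_of_ne (hd.2 i).2 (hc i hi).2⟩)

/-- `𝒰` contains its limits from the right: a weak limit that is not a unique expansion is purely
periodic, so in a larger base `p` its value drops below `1`, and a unique expansion of `1` in base
`p` with that period as prefix would have a tail of value above `1`. -/
lemma mem_univ_of_right {q : ℝ} (hq : 3 / 2 < q) (hq2 : q < 2)
    (h : ∀ δ > 0, ∃ p ∈ UnivSet 1, q < p ∧ p < q + δ) : q ∈ UnivSet 1 := by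
  have hq1 : 1 < q := by linarith
  obtain ⟨d, hd, hN⟩ := exists_weak_limit hq1 (fun p c => val p c = 1) (by
    intro δ hδ
    obtain ⟨p, hp, hqp, hpd⟩ := h (min δ (2 - q)) (lt_min hδ (by linarith))
    have h1 := min_le_left δ (2 - q)
    have h2 := min_le_right δ (2 - q)
    obtain ⟨-, c, hc1, hc⟩ := mem_univSet_iff.1 hp
    obtain ⟨ht1, ht2⟩ := tails_of_univ (by linarith) (by linarith) hc hc1
    refine ⟨p, hqp, by linarith, c, by simpa [hc1] using hδ, fun i => ⟨?_, (ht2 i).le⟩, hc1⟩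
    rcases Nat.eq_zero_or_pos i with rfl | hi
    · simp [hc1]
    · exact (ht1 i hi).le)
  rw [mem_univSet_iff]
  refine ⟨⟨hq1, hq2.le⟩, d, hd.1, ?_⟩
  by_contra hA
  have hper : ∃ n, 1 ≤ n ∧ sh n d = d := by
    obtain ⟨n, hn, h1 | h1⟩ := hd.exists_eq hA
    · exact ⟨n, hn, hd.sh_eq hq1 hq2 h1⟩
    · have h2 := hd.sh_cj_eq hq1 hq2 h1
      refine ⟨n + n, by omega, ?_⟩
      have h3 : sh n d = cj d := by
        rw [← cj_cj (sh n d), ← sh_cj, h2]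
      rw [← sh_sh, h3, h2]
  obtain ⟨n, hn, hsh⟩ := hper
  obtain ⟨p, hqp, -, c, hcd, hc, hc1⟩ := hN n 1 one_pos
  have hp1 : 1 < p := by linarith
  have h1 := val_agree hp1 c d n hcd
  rw [hsh, hc1] at h1
  have h2 := (hc n).1
  have h3 : val p d < 1 := by
    rw [← hd.1]
    by_contra! h5
    have h6 := val_strictAnti hq1 hqp d (by rw [hd.1] at h5; linarith)
    linarith
  have h4 : 1 < p ^ n := one_lt_pow₀ hp1 (by omega)
  nlinarith

/-! ### Antiperiodic and periodic constructions -/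

lemma exists_gap (f : ℕ → ℝ) (m : ℕ) (h : ∀ i < m, f i < 1) : ∃ γ > 0, ∀ i < m, f i ≤ 1 - γ := by
  induction m with
  | zero => exact ⟨1, one_pos, by simp⟩
  | succ m ih =>
    obtain ⟨γ, hγ, h1⟩ := ih fun i hi => h i (by omega)
    have h2 := h m (by omega)
    refine ⟨min γ (1 - f m), lt_min hγ (by linarith), fun i hi => ?_⟩
    rcases Nat.lt_succ_iff_lt_or_eq.1 hi with h3 | rfl
    · have := h1 i h3
      have := min_le_left γ (1 - f m)
      linarith
    · have := min_le_right γ (1 - f i)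
      linarith

/-- Approximation of a weak expansion `d` of `1` by uniquely expanded numbers `val q c < 1` in the
same base. Write `w_i` for the value of the `i`-th tail of the reflection of `d`. When
`q^{-m}(1 - w_m)` is smaller than all the previous such numbers, the antiperiodic sequence
`c` with `c_0 … c_{m-1} = d_0 … d_{m-1}` and `sh m c = cj c` has all its tails below `1`. -/
lemma exists_antiperiodic {q : ℝ} (hq : 1 < q) {d : ℕ → Bool} (hd : val q d = 1)
    (hv : ∀ i, val q (sh i d) ≤ 1) (hw : ∀ i, val q (sh i (cj d)) < 1) {η : ℝ} (hη : 0 < η) :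
    ∃ c, ∃ γ > 0, 1 - η < val q c ∧ val q c < 1 ∧
      ∀ i, val q (sh i c) ≤ 1 - γ ∧ val q (sh i (cj c)) ≤ 1 - γ := by
  have hw0 : ∀ i, 0 ≤ val q (sh i (cj d)) := fun i => val_nonneg hq _
  have hu : Tendsto (fun i => q ^ i / (1 - val q (sh i (cj d)))) atTop atTop := by
    refine tendsto_atTop_mono (fun i => ?_) (tendsto_pow_atTop_atTop_of_one_lt hq)
    have h1 := hw i
    have h2 := hw0 i
    rw [le_div_iff₀ (by linarith)]
    have : 0 < q ^ i := by positivity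
    nlinarith
  have hbig : ∀ᶠ m in atTop, 1 / η < q ^ m :=
    (tendsto_pow_atTop_atTop_of_one_lt hq).eventually_gt_atTop _
  obtain ⟨m, hscore, hm, hm1⟩ :=
    ((frequently_high_scores hu).and_eventually (hbig.and (eventually_ge_atTop 1))).exists
  -- `m` is a record: the score `q^i / (1 - w_i)` at `m` exceeds all the previous ones.
  let c : ℕ → Bool := fun i => if i / m % 2 = 0 then d (i % m) else !d (i % m)
  have hcd : ∀ i < m, c i = d i := fun i hi => by
    simp [c, Nat.div_eq_of_lt hi, Nat.mod_eq_of_lt hi]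
  have hanti : sh m c = cj c := by
    funext i
    have h1 : (m + i) / m = i / m + 1 := by
      rw [Nat.add_div_left _ (by omega)]
    have h2 : (m + i) % m = i % m := by simp
    simp only [sh, cj, c, h1, h2]
    rcases Nat.mod_two_eq_zero_or_one (i / m) with h | h <;> simp [Nat.add_mod, h]
  have hC := val_agree hq c d m hcd
  rw [hanti, hd, val_cj hq] at hC
  have hwm := hw m
  have hwm0 := hw0 m
  have hwm' := hwm
  rw [sh_cj, val_cj hq] at hwm'
  have hqm : 0 < q ^ m := by positivity
  have hCm : val q (sh m (cj d)) - val q c = q ^ m * (val q c - 1) := by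
    rw [sh_cj, val_cj hq]; linarith
  have hC1 : val q c < 1 := by
    by_contra! h
    have : 0 ≤ q ^ m * (val q c - 1) := mul_nonneg hqm.le (by linarith)
    linarith
  have hC2 : 1 - η < val q c := by
    rw [div_lt_iff₀ hη] at hm
    by_contra! h
    have : q ^ m * η ≤ q ^ m * (1 - val q c) := by gcongr; linarith
    linarith
  have hfirst : ∀ i < m, val q (sh i c) < 1 ∧ val q (sh i (cj c)) < 1 := by
    intro i hi
    have h1 := val_agree hq c d i fun j hj => hcd j (by omega)
    rw [hd] at h1
    have h2 : 0 < q ^ i * (1 - val q c) := mul_pos (by positivity) (by linarith)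
    have h3 := hv i
    refine ⟨by linarith, ?_⟩
    have h4 := hscore i hi
    rw [div_lt_div_iff₀ (by linarith [hw i]) (by linarith)] at h4
    have h5 : q ^ m * (1 - val q c) < 1 - val q (sh m (cj d)) := by linarith
    have h6 : val q (sh i (cj c)) = val q (sh i (cj d)) + q ^ i * (1 - val q c) := by
      rw [sh_cj, val_cj hq, sh_cj, val_cj hq]; linarith
    rw [h6]
    by_contra! h7
    have h8 : q ^ m * (1 - val q (sh i (cj d))) ≤ q ^ m * (q ^ i * (1 - val q c)) := by
      gcongr; linarith
    have h9 : q ^ i * (q ^ m * (1 - val q c)) < q ^ i * (1 - val q (sh m (cj d))) := by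
      gcongr
    linarith
  obtain ⟨γ₁, hγ₁, hg₁⟩ := exists_gap _ m fun i hi => (hfirst i hi).1
  obtain ⟨γ₂, hγ₂, hg₂⟩ := exists_gap _ m fun i hi => (hfirst i hi).2
  refine ⟨c, min γ₁ γ₂, lt_min hγ₁ hγ₂, hC2, hC1, fun i => ?_⟩
  induction i using Nat.strong_induction_on with
  | _ i ih =>
    rcases lt_or_ge i m with hi | hi
    · have h1 := hg₁ i hi
      have h2 := hg₂ i hi
      have h3 := min_le_left γ₁ γ₂
      have h4 := min_le_right γ₁ γ₂
      constructor <;> linarith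
    · obtain ⟨j, rfl⟩ := Nat.exists_eq_add_of_le hi
      have h1 := ih j (by omega)
      rw [sh_cj, ← sh_sh, hanti, ← sh_cj]
      refine ⟨h1.2, ?_⟩
      rw [cj_cj]
      exact h1.1

lemma exists_left {q : ℝ} (hq : 1 < q) {ε : ℝ} (hε : 0 < ε) :
    ∃ r, 1 < r ∧ q - ε < r ∧ r < q ∧ 1 / (r - 1) - 1 / (q - 1) < ε := by
  have h1 : Tendsto (fun r : ℝ => 1 / (r - 1)) (nhdsWithin q (Iio q)) (nhds (1 / (q - 1))) :=
    tendsto_base hq (tendsto_id.mono_left nhdsWithin_le_nhds)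
  have h2 : ∀ᶠ r : ℝ in nhdsWithin q (Iio q), 1 / (r - 1) < 1 / (q - 1) + ε :=
    h1.eventually_lt_const (by linarith)
  have h3 : ∀ᶠ r : ℝ in nhdsWithin q (Iio q), 1 < r :=
    nhdsWithin_le_nhds (eventually_gt_nhds hq)
  have h4 : ∀ᶠ r : ℝ in nhdsWithin q (Iio q), q - ε < r :=
    nhdsWithin_le_nhds (eventually_gt_nhds (by linarith))
  have h5 : ∀ᶠ r : ℝ in nhdsWithin q (Iio q), r < q := self_mem_nhdsWithin
  obtain ⟨r, h2, h3, h4, h5⟩ := (h2.and (h3.and (h4.and h5))).exists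
  exact ⟨r, h3, h4, h5, by linarith⟩

lemma sh_mul_period {d : ℕ → Bool} {n : ℕ} (h : sh n d = d) (j : ℕ) : sh (j * n) d = d := by
  induction j with
  | zero => simp
  | succ j ih => rw [Nat.succ_mul, ← sh_sh, ih, h]

lemma sh_mod_period {d : ℕ → Bool} {n : ℕ} (h : sh n d = d) (i : ℕ) :
    sh i d = sh (i % n) d := by
  conv_lhs => rw [← Nat.div_add_mod' i n, ← sh_sh, sh_mul_period h]

/-- A base with a periodic weak expansion `d` of `1`, whose reflection has all tails below `1`, is
a limit of elements of `𝒰` from the left. The expansions of `1` in those smaller bases `r` consist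
of many periods of `d` followed by a sequence `t`, uniquely expanded in all bases close to `q`,
of value slightly below `1`. -/
lemma exists_univ_left {q : ℝ} (hq : 1 < q) (hq2 : q ≤ 2) {d : ℕ → Bool} (hd : val q d = 1)
    (hw : ∀ i, val q (sh i (cj d)) < 1) {n : ℕ} (hn : 1 ≤ n) (hper : sh n d = d)
    (hmin : ∀ i, 0 < i → i < n → val q (sh i d) < 1) {δ : ℝ} (hδ : 0 < δ) :
    ∃ r ∈ UnivSet 1, q - δ < r ∧ r < q := by
  have hcjper : sh n (cj d) = cj d := by rw [sh_cj, hper]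
  obtain ⟨γ₁, hγ₁, hg₁⟩ := exists_gap (fun i => val q (sh i (cj d))) n fun i _ => hw i
  obtain ⟨γ₂, hγ₂, hg₂⟩ := exists_gap (fun i => if i = 0 then 0 else val q (sh i d)) n (by
    intro i hi
    by_cases h : i = 0
    · simp [h]
    · simpa [h] using hmin i (by omega) hi)
  have hmod : ∀ i, i % n < n := fun i => Nat.mod_lt _ (by omega)
  have hW : ∀ i, val q (sh i (cj d)) ≤ 1 - γ₁ := fun i => by
    rw [sh_mod_period hcjper]; exact hg₁ _ (hmod i)
  have hV : ∀ i, i % n ≠ 0 → val q (sh i d) ≤ 1 - γ₂ := fun i hi => by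
    rw [sh_mod_period hper]
    have := hg₂ _ (hmod i)
    simpa [hi] using this
  have hV1 : ∀ i, val q (sh i d) ≤ 1 := fun i => by
    by_cases h : i % n = 0
    · rw [sh_mod_period hper, h, sh_zero, hd]
    · linarith [hV i h]
  obtain ⟨t, γ₃, hγ₃, ht1, ht2, ht⟩ := exists_antiperiodic hq hd hV1 hw (half_pos hγ₁)
  set γ := min γ₁ (min γ₂ γ₃) with hγdef
  have hγ : 0 < γ := lt_min hγ₁ (lt_min hγ₂ hγ₃)
  have hle1 : γ ≤ γ₁ := min_le_left _ _
  have hle2 : γ ≤ γ₂ := (min_le_right _ _).trans (min_le_left _ _)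
  have hle3 : γ ≤ γ₃ := (min_le_right _ _).trans (min_le_right _ _)
  obtain ⟨r₀, hr1, hrδ, hrq, hκ⟩ := exists_left hq (lt_min hδ (show 0 < γ / 4 by positivity))
  have hrδ' : q - δ < r₀ := by linarith [min_le_left δ (γ / 4)]
  replace hκ := hκ.trans_le (min_le_right δ (γ / 4))
  have hD0 : 1 < val r₀ d := by
    rw [← hd]; exact val_strictAnti hr1 hrq d (by rw [hd]; exact one_pos)
  obtain ⟨j, hj⟩ := pow_unbounded_of_one_lt (1 / (r₀ - 1) / (val r₀ d - 1)) hr1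
  rw [div_lt_iff₀ (by linarith)] at hj
  have hj' : 1 / (r₀ - 1) < r₀ ^ (j * n) * (val r₀ d - 1) := by
    refine hj.trans_le ?_
    gcongr
    · exact hr1.le
    · exact Nat.le_mul_of_pos_right _ (by omega)
  generalize hm : j * n = m at hj'
  have hdm : sh m d = d := by rw [← hm]; exact sh_mul_period hper j
  have hag : ∀ i < m, glue m d t i = d i := fun i hi => glue_of_lt hi d t
  have hc0 : 1 < val r₀ (glue m d t) := by
    have h1 := val_agree hr1 _ d m hag
    rw [sh_glue, hdm] at h1
    have h2 := val_le hr1 d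
    have h3 := val_nonneg hr1 t
    have h4 : 0 < r₀ ^ m := by positivity
    by_contra! h5
    have h6 : r₀ ^ m * (val r₀ (glue m d t) - val r₀ d) ≤ r₀ ^ m * (1 - val r₀ d) := by gcongr
    linarith
  have hcq : val q (glue m d t) < 1 := by
    have h1 := val_agree hq _ d m hag
    rw [sh_glue, hdm, hd] at h1
    have h4 : 0 < q ^ m := by positivity
    by_contra! h5
    have h6 : 0 ≤ q ^ m * (val q (glue m d t) - 1) := mul_nonneg h4.le (by linarith)
    linarith
  -- The value of `d⋯dt` passes through `1` between `r₀` and `q`. All other tails keep a distance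
  -- of at least `γ` from `1` in base `q`, and values change by less than `γ/4` down to `r₀`.
  obtain ⟨r, ⟨hrr, hrq'⟩, hr⟩ := intermediate_value_Ioo' hrq.le
    ((continuousOn_val (glue m d t)).mono fun s hs => hr1.trans_le hs.1) ⟨hcq, hc0⟩
  simp only at hr
  have hr1' : 1 < r := hr1.trans hrr
  have hup : ∀ a, val r a ≤ val q a + γ / 4 := fun a => by
    have h1 := val_lip hr1' hrq'.le a
    have h2 : 1 / (r - 1) ≤ 1 / (r₀ - 1) := by
      apply one_div_le_one_div_of_le <;> linarith
    linarith
  have hD : 1 < val r d := by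
    rw [← hd]; exact val_strictAnti hr1' hrq' d (by rw [hd]; exact one_pos)
  have htail := val_agree hr1' _ d m hag
  rw [sh_glue, hdm, hr] at htail
  refine ⟨r, mem_univSet_iff.2 ⟨⟨hr1', by linarith⟩, _, hr, adm_of_tails fun i hi => ?_⟩,
    by linarith, hrq'⟩
  rcases lt_or_ge i m with him | him
  · have h1 := val_agree hr1' _ d i fun j hj => hag j (by omega)
    rw [hr] at h1
    have h2 : r ^ i * (val r d - 1) ≤ r ^ m * (val r d - 1) := by
      gcongr
      exact hr1'.le
    have h3 : 1 * (val r d - 1) < r ^ i * (val r d - 1) := by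
      have := one_lt_pow₀ hr1' (show i ≠ 0 by omega)
      gcongr
    constructor
    · by_cases h : i % n = 0
      · have h4 : sh i d = d := by rw [sh_mod_period hper, h, sh_zero]
        rw [h4] at h1
        linarith
      · have := hV i h
        have := hup (sh i d)
        linarith
    · rw [sh_cj, val_cj hr1']
      have h4 := hup (sh i (cj d))
      have h5 := hW i
      rw [sh_cj, val_cj hr1'] at h4
      rw [sh_cj] at h5
      have h6 := hup d
      have h7 := val_anti hr1' hrq'.le t
      linarith
  · obtain ⟨i, rfl⟩ := Nat.exists_eq_add_of_le him
    rw [sh_cj, sh_add_glue, ← sh_cj]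
    have h1 := ht i
    have h2 := hup (sh i t)
    have h3 := hup (sh i (cj t))
    constructor <;> linarith

lemma sub_le_pow_sub {p q : ℝ} (hq : 1 < q) (hqp : q ≤ p) {k : ℕ} (hk : 1 ≤ k) :
    p - q ≤ p ^ k - q ^ k := by
  obtain ⟨j, rfl⟩ := Nat.exists_eq_add_of_le' hk
  have h1 : q ^ j ≤ p ^ j := by gcongr
  have h2 : 1 ≤ q ^ j := one_le_pow₀ hq.le
  rw [pow_succ, pow_succ]
  nlinarith

/-- Antiperiodic weak limits do not occur for expansions of the numbers `1 - (p^k x - 1/(p-1))`: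
these numbers decrease faster in `p` than `val p d`, so that an expansion `c` sharing a long prefix
with `d` is smaller than `d` by at least a multiple of `p - q`, and the reflected tail of `c` after
an odd number of half-periods is above `1`. -/
lemma not_antiperiodic {q x : ℝ} (hq : 1 < q) (hx : 0 < x) {k : ℕ} (hk : 1 ≤ k)
    (hqx : q ^ k * x = 1 / (q - 1)) {d : ℕ → Bool} (hd : val q d = 1) {n : ℕ} (hn : 1 ≤ n)
    (hanti : sh n (cj d) = d)
    (H : ∀ N, ∀ δ > 0, ∃ p, q < p ∧ p < q + δ ∧ ∃ c, (∀ i < N, c i = d i) ∧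
      (∀ i, val p (sh i c) ≤ 1 ∧ val p (sh i (cj c)) ≤ 1) ∧
      val p c = 1 - (p ^ k * x - 1 / (p - 1))) : False := by
  have h2n : sh (n + n) d = d := by
    have h3 : sh n d = cj d := by rw [← cj_cj (sh n d), ← sh_cj, hanti]
    rw [← sh_sh, h3, hanti]
  obtain ⟨j, hj⟩ := pow_unbounded_of_one_lt (1 / (q - 1) ^ 2 / x) hq
  rw [div_lt_iff₀ hx] at hj
  have hN : sh (j * (n + n) + n) (cj d) = d := by
    rw [← sh_sh, sh_cj, sh_mul_period h2n, hanti]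
  have hjN : j ≤ j * (n + n) + n := by nlinarith
  generalize j * (n + n) + n = N at hN hjN
  obtain ⟨p, hqp, -, c, hcd, hc, hcv⟩ := H N 1 one_pos
  have hp : 1 < p := hq.trans hqp
  have h1 := val_agree hp c d N hcd
  have h2 := (hc N).2
  rw [sh_cj, val_cj hp] at h2
  have h3 : val p (sh N (cj d)) = val p d := by rw [hN]
  rw [sh_cj, val_cj hp] at h3
  have h4 := val_lip hq hqp.le d
  rw [hd] at h4
  have h5 : x * (p - q) ≤ x * (p ^ k - q ^ k) := by
    exact mul_le_mul_of_nonneg_left (sub_le_pow_sub hq hqp.le hk) hx.le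
  have h6 : x * (p - q) ≤ val p d - val p c := by rw [hcv]; linarith
  have h7 : 1 / (q - 1) - 1 / (p - 1) ≤ 1 / (q - 1) ^ 2 * (p - q) := by
    have hq0 : 0 < q - 1 := by linarith
    have hp0 : 0 < p - 1 := by linarith
    have : 1 / (q - 1) - 1 / (p - 1) = 1 / ((q - 1) * (p - 1)) * (p - q) := by
      field_simp; ring
    rw [this]
    gcongr
    rw [sq]; gcongr
  have h8 : q ^ j ≤ p ^ N :=
    (pow_le_pow_right₀ hq.le hjN).trans (by gcongr)
  have h9 : p ^ N * (x * (p - q)) ≤ p ^ N * (val p d - val p c) := by gcongr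
  have h10 : q ^ j * (x * (p - q)) ≤ p ^ N * (x * (p - q)) := by
    have : 0 < p - q := by linarith
    gcongr
  have h11 : 1 / (q - 1) ^ 2 * (p - q) < q ^ j * x * (p - q) := by
    have : 0 < p - q := by linarith
    gcongr
  linarith

/-! ### Expansions of `x` and reflection -/

lemma qG_facts : 3 / 2 < qG ∧ qG * (qG - 1) = 1 := by
  have h1 : (2 : ℝ) < Real.sqrt 5 := by
    rw [Real.lt_sqrt (by norm_num)]; norm_num
  have h2 := Real.mul_self_sqrt (show (0 : ℝ) ≤ 5 by norm_num)
  unfold qG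
  constructor
  · linarith
  · linear_combination h2 / 4

/-- If `x ≥ q_G^{-k}` has a unique expansion in base `p`, then `x > p^{-k}/(p-1)`. Otherwise
`1 ≤ p^j x ≤ 1/(p-1)` for some `j ≥ k`; for `p ≥ q_G` this holds with `j = k`, and for `p < q_G`
the intervals `[p^{-j}, p^{-j}/(p-1)]` overlap. Then the first `j` digits of `x` have to be `0`,
while the last of them could be `1`. -/
lemma univ_bound {x p : ℝ} (hx : 0 < x) {k : ℕ} (hk : 1 ≤ k) (hxk : 1 ≤ qG ^ k * x)
    (hp : p ∈ UnivSet x) : 1 / (p - 1) < p ^ k * x := by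
  obtain ⟨⟨hp1, hp2⟩, c, hc, hA⟩ := mem_univSet_iff.1 hp
  by_contra! hle
  obtain ⟨hG, hG1⟩ := qG_facts
  have hj : ∃ j, k ≤ j ∧ 1 ≤ p ^ j * x ∧ p ^ j * x ≤ 1 / (p - 1) := by
    rcases le_or_gt qG p with h | h
    · exact ⟨k, le_rfl, hxk.trans (by gcongr), hle⟩
    · classical
      have hex : ∃ j, k ≤ j ∧ 1 ≤ p ^ j * x := by
        obtain ⟨j, hj⟩ := pow_unbounded_of_one_lt (1 / x) hp1
        rw [div_lt_iff₀ hx] at hj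
        refine ⟨max k j, le_max_left _ _, hj.le.trans ?_⟩
        gcongr
        · exact hp1.le
        · exact le_max_right _ _
      have hs := Nat.find_spec hex
      have hm := fun i => Nat.find_min (m := i) hex
      generalize Nat.find hex = j at hs hm
      refine ⟨j, hs.1, hs.2, ?_⟩
      rcases hs.1.eq_or_lt with rfl | hkj
      · exact hle
      · obtain ⟨i, rfl⟩ := Nat.exists_eq_add_of_le' (show 1 ≤ j by omega)
        have h1 := hm i (by omega)
        have h2 : p ^ i * x < 1 := by
          by_contra! h3
          exact h1 ⟨by omega, h3⟩
        rw [le_div_iff₀ (by linarith), pow_succ]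
        have h3 : p * (p - 1) ≤ 1 := by nlinarith
        have h4 : 0 < p * (p - 1) := mul_pos (by linarith) (by linarith)
        have h5 : 0 < p ^ i * x := by positivity
        nlinarith
  obtain ⟨j, hkj, h1, h2⟩ := hj
  have hdig : ∀ i < j, val p (sh i c) = p ^ i * x → c i = false := by
    intro i hi hv
    by_contra hci
    rw [Bool.not_eq_false] at hci
    have h3 := (hA i).2 hci
    have h4 := val_step hp1 c i
    rw [sh_cj, val_cj hp1, h4, hci, hv, dig_true] at h3
    have h5 : p ^ (i + 1) * x ≤ p ^ j * x := by
      gcongr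
      · exact hp1.le
      · omega
    rw [pow_succ] at h5
    linarith
  have hval : ∀ i ≤ j, val p (sh i c) = p ^ i * x := by
    intro i
    induction i with
    | zero => intro _; simp [hc]
    | succ i ih =>
      intro hi
      have h3 := ih (by omega)
      rw [val_step hp1, hdig i (by omega) h3, h3, dig_false, pow_succ]; ring
  obtain ⟨i, rfl⟩ := Nat.exists_eq_add_of_le' (show 1 ≤ j by omega)
  have h3 := (hA i).1 (hdig i (by omega) (hval i (by omega)))
  rw [hval (i + 1) le_rfl] at h3
  linarith

/-- For `p^l x < 1` and `p^{l+1} x > 1/(p-1)`, a unique expansion of `x` in base `p` has the form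
`0^l 1` followed by the reflection of a unique expansion of `1 - (p^{l+1} x - 1/(p-1))`. -/
lemma mem_univ_iff_reflected {x p : ℝ} (hp : 1 < p) (hp2 : p ≤ 2) (hx : 0 < x) {l : ℕ}
    (h1 : p ^ l * x < 1) (h2 : 1 / (p - 1) < p ^ (l + 1) * x) :
    p ∈ UnivSet x ↔ ∃ c, Adm p c ∧ val p c = 1 - (p ^ (l + 1) * x - 1 / (p - 1)) := by
  constructor
  · intro h
    obtain ⟨-, c, hc, hA⟩ := mem_univSet_iff.1 h
    have hdig : ∀ i < l, val p (sh i c) = p ^ i * x → c i = false := by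
      intro i hi hv
      by_contra hci
      rw [Bool.not_eq_false] at hci
      have h4 := val_step hp c i
      have h3 := val_nonneg hp (sh (i + 1) c)
      rw [hv, hci, dig_true] at h4
      have h5 : p ^ (i + 1) * x ≤ p ^ l * x := by
        gcongr
        · exact hp.le
        · omega
      rw [pow_succ] at h5
      linarith
    have hval : ∀ i ≤ l, val p (sh i c) = p ^ i * x := by
      intro i
      induction i with
      | zero => intro _; simp [hc]
      | succ i ih =>
        intro hi
        have h3 := ih (by omega)
        rw [val_step hp, hdig i (by omega) h3, h3, dig_false, pow_succ]; ring
    have h3 := val_step hp c l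
    have h4 := val_le hp (sh (l + 1) c)
    rw [hval l le_rfl] at h3
    have hl : c l = true := by
      by_contra hcl
      rw [Bool.not_eq_true] at hcl
      rw [hcl, dig_false] at h3
      rw [pow_succ] at h2
      linarith
    rw [hl, dig_true] at h3
    refine ⟨cj (sh (l + 1) c), (hA.sh _).cj, ?_⟩
    rw [val_cj hp, h3, pow_succ]; ring
  · rintro ⟨c, hA, hc⟩
    let f : ℕ → Bool := glue 1 (fun _ => true) (cj c)
    let z : ℕ → Bool := fun _ => false
    have hz : val p z = 0 := by simp [val, z]
    have hf0 : f 0 = true := by simp [f, glue]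
    have hf1 : sh 1 f = cj c := sh_glue _ _ _
    have hf : val p f = p ^ l * x := by
      have h3 := val_step hp f 0
      rw [zero_add, hf1, sh_zero, hf0, dig_true, val_cj hp, hc, pow_succ] at h3
      have h4 : p * (val p f - p ^ l * x) = 0 := by linear_combination -h3
      rcases mul_eq_zero.1 h4 with h5 | h5 <;> linarith
    have hag : ∀ i < l, glue l z f i = false := fun i hi => glue_of_lt hi z f
    have htails : ∀ i ≤ l, val p (sh i (glue l z f)) = p ^ i * val p (glue l z f) := by
      intro i hi
      have h3 := val_agree hp (glue l z f) z i fun j hj => hag j (by omega)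
      have h4 : sh i z = z := rfl
      rw [h4, hz] at h3
      linarith
    have hv : val p (glue l z f) = x := by
      have h3 := htails l le_rfl
      rw [sh_glue, hf] at h3
      exact (mul_left_cancel₀ (by positivity) h3).symm
    have hsucc : sh (l + 1) (glue l z f) = cj c := by rw [sh_add_glue, hf1]
    refine mem_univSet_iff.2 ⟨⟨hp, hp2⟩, glue l z f, hv, fun n => ?_⟩
    rcases lt_trichotomy n l with hn | rfl | hn
    · rw [hag n hn, htails (n + 1) hn, hv]
      refine ⟨fun _ => lt_of_le_of_lt ?_ h1, by simp⟩
      gcongr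
      · exact hp.le
      · omega
    · have h3 : glue n z f n = true := by
        have := glue_add n 0 z f
        rwa [hf0, add_zero] at this
      rw [h3, sh_cj, hsucc, cj_cj, hc]
      exact ⟨by simp, fun _ => by linarith⟩
    · obtain ⟨i, rfl⟩ := Nat.exists_eq_add_of_le (show l + 1 ≤ n by omega)
      have h3 : glue l z f (l + 1 + i) = cj c i := congrFun hsucc i
      rw [h3, show l + 1 + i + 1 = (l + 1) + (i + 1) by ring, sh_cj, ← sh_sh, hsucc, ← sh_cj]
      exact hA.cj i

/-! ### Nonemptiness of `𝒰(x)` -/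

/-- `𝒰(x)` is nonempty for `0 < x < 1`. Either `2 ∈ 𝒰(x)`, or `x` is a dyadic rational
`(u01^∞)_2`; then `u0` followed by the expansion of `1` in a base `r ∈ 𝒰` close to `2` represents
`x` in a base between `r` and `2`. -/
lemma univSet_nonempty {x : ℝ} (hx : 0 < x) (hx1 : x < 1) : (UnivSet x).Nonempty := by
  have h2 : (1 : ℝ) < 2 := one_lt_two
  have h21 : 1 / ((2 : ℝ) - 1) = 1 := by norm_num
  obtain ⟨c, hc⟩ := exists_val h2 le_rfl hx.le (by rw [h21]; exact hx1.le)
  by_cases hA : Adm 2 c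
  · exact ⟨2, mem_univSet_iff.2 ⟨⟨h2, le_rfl⟩, c, hc, hA⟩⟩
  have hn : ∃ n, val 2 (sh n c) = 1 / 2 := by
    unfold Adm at hA
    push Not at hA
    obtain ⟨n, hn⟩ := hA
    refine ⟨n, ?_⟩
    have h3 := val_step h2 c n
    have h4 := val_le h2 (sh (n + 1) c)
    have h5 := val_nonneg h2 (sh (n + 1) c)
    cases hcn : c n with
    | false =>
      rw [hcn, dig_false] at h3
      by_cases h6 : 1 ≤ val 2 (sh (n + 1) c)
      · linarith
      · have := (hn fun _ => by linarith).1
        simp [hcn] at this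
    | true =>
      have h6 := (hn (by simp [hcn])).2
      rw [hcn, dig_true] at h3
      rw [sh_cj, val_cj h2] at h6
      linarith
  obtain ⟨n, hn⟩ := hn
  let z : ℕ → Bool := fun _ => false
  have hz : ∀ p, val p z = 0 := fun p => by simp [val, z]
  obtain ⟨r, hr, hr1, hr2⟩ := exists_univ_left h2 le_rfl (d := cj z)
    (by rw [val_cj h2, hz]; norm_num)
    (fun i => by
      have : sh i (cj (cj z)) = z := by rw [cj_cj]; rfl
      rw [this, hz]; exact one_pos)
    le_rfl rfl (fun i _ _ => by omega) (show (0 : ℝ) < 1 / 2 ^ (n + 3) by positivity)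
  have hpow : (1 : ℝ) / 2 ^ (n + 3) = 1 / 2 ^ n * (1 / 8) := by rw [pow_add]; field_simp; norm_num
  have hpow' : (1 : ℝ) / 2 ^ (n + 2) = 1 / 2 ^ n * (1 / 4) := by rw [pow_add]; field_simp; norm_num
  have hpow1 : (1 : ℝ) / 2 ^ n ≤ 1 := by
    rw [div_le_one (by positivity)]; exact one_le_pow₀ h2.le
  have hpow0 : (0 : ℝ) < 1 / 2 ^ n := by positivity
  have hr3 : 3 / 2 < r := by linarith
  have hr0 : 1 < r := by linarith
  obtain ⟨-, a, ha1, haA⟩ := mem_univSet_iff.1 hr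
  have ha0 : a 0 = true := by
    by_contra h
    rw [Bool.not_eq_true] at h
    have h3 := (haA 0).1 h
    have h4 := val_step hr0 a 0
    rw [h, sh_zero, ha1, dig_false] at h4
    linarith
  let g : ℕ → Bool := glue 1 (fun _ => false) a
  have hg0 : g 0 = false := by simp [g, glue]
  have hg1 : sh 1 g = a := sh_glue _ _ _
  have hg : ∀ p, 1 < p → val p a = p * val p g := fun p hp => by
    have := val_step hp g 0
    rw [zero_add, hg1, sh_zero, hg0, dig_false] at this
    linarith
  let w : ℕ → Bool := glue 1 (fun _ => true) z
  have hw : ∀ p, 1 < p → p * val p w = 1 := fun p hp => by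
    have h3 := val_step hp w 0
    have h4 : w 0 = true := by simp [w, glue]
    have h5 : sh 1 w = z := sh_glue _ _ _
    rw [zero_add, h5, hz, sh_zero, h4, dig_true] at h3
    linarith
  have hpos : ∀ p : ℝ, 1 < p → p ^ n ≠ 0 := fun p hp => by positivity
  have hwx : val 2 (glue n c w) = x := by
    have h3 := val_agree h2 (glue n c w) c n fun i hi => glue_of_lt hi c w
    have h4 := hw 2 h2
    rw [sh_glue, hn, hc] at h3
    have h5 : (2 : ℝ) ^ n * (val 2 (glue n c w) - x) = 0 := by linarith
    rcases mul_eq_zero.1 h5 with h6 | h6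
    · exact absurd h6 (hpos 2 h2)
    · linarith
  have he2 : val 2 (glue n c g) < x := by
    have h3 := val_agree h2 (glue n c g) c n fun i hi => glue_of_lt hi c g
    have h4 := hg 2 h2
    have h5 : val 2 a < 1 := by
      rw [← ha1]
      by_contra! h6
      have := val_strictAnti hr0 hr2 a (by linarith)
      linarith
    rw [sh_glue, hn, hc] at h3
    by_contra! h6
    have : 0 ≤ (2 : ℝ) ^ n * (val 2 (glue n c g) - x) := mul_nonneg (by positivity) (by linarith)
    linarith
  have her : x < val r (glue n c g) := by
    have h3 := val_agree hr0 (glue n c g) (glue n c w) n fun i hi => by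
      rw [glue_of_lt hi, glue_of_lt hi]
    have h4 := hg r hr0
    have h5 := hw r hr0
    rw [sh_glue, sh_glue] at h3
    have h6 : val r g - val r w = 0 := by
      have : r * (val r g - val r w) = 0 := by linarith
      rcases mul_eq_zero.1 this with h | h
      · linarith
      · exact h
    rw [h6] at h3
    have h7 := val_strictAnti hr0 hr2 (glue n c w) (by rw [hwx]; exact hx)
    rcases mul_eq_zero.1 h3.symm with h8 | h8
    · exact absurd h8 (hpos r hr0)
    · linarith
  obtain ⟨s, ⟨hrs, hs2⟩, hs⟩ := intermediate_value_Ioo' hr2.le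
    ((continuousOn_val (glue n c g)).mono fun s hs => hr0.trans_le hs.1) ⟨he2, her⟩
  simp only at hs
  have hs1 : 1 < s := hr0.trans hrs
  have hen : glue n c g n = false := by
    have := glue_add n 0 c g
    rwa [hg0, add_zero] at this
  have hsucc : sh (n + 1) (glue n c g) = a := by rw [sh_add_glue, hg1]
  have hen1 : glue n c g (n + 1) = true := by rw [← ha0, ← hsucc]; rfl
  have hbase : 1 / (s - 1) < 1 + 1 / 2 ^ (n + 2) := by
    rw [div_lt_iff₀ (by linarith)]
    nlinarith
  -- A sequence with a digit `1` in one of the first `n + 2` places has a reflection of value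
  -- below `1`, because the base is close to `2`.
  have hlt : ∀ b : ℕ → Bool, ∀ j ≤ n + 1, b j = true → val s (cj b) < 1 := by
    intro b j hj hb
    have h3 := le_val hs1 b j hb
    have h4 : (1 : ℝ) / 2 ^ (n + 2) ≤ 1 / s ^ (j + 1) := by
      have h5 : s ^ (j + 1) ≤ 2 ^ (n + 2) := calc
        s ^ (j + 1) ≤ 2 ^ (j + 1) := by gcongr
        _ ≤ 2 ^ (n + 2) := pow_le_pow_right₀ h2.le (by omega)
      gcongr
    rw [val_cj hs1]
    linarith
  refine ⟨s, mem_univSet_iff.2 ⟨⟨hs1, hs2.le⟩, glue n c g, hs, fun i => ?_⟩⟩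
  rcases lt_trichotomy i n with hi | rfl | hi
  · constructor
    · intro _
      have := hlt (cj (sh (i + 1) (glue n c g))) (n - (i + 1)) (by omega) (by
        simp only [cj, sh]
        rw [show i + 1 + (n - (i + 1)) = n by omega, hen]; rfl)
      rwa [cj_cj] at this
    · intro _
      rw [sh_cj]
      refine hlt _ (n - i) (by omega) ?_
      simp only [sh]
      rw [show i + 1 + (n - i) = n + 1 by omega, hen1]
  · rw [hen, hsucc]
    refine ⟨fun _ => ?_, by simp⟩
    rw [← ha1]
    by_contra! h6
    have := val_strictAnti hr0 hrs a (by linarith)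
    linarith
  · obtain ⟨j, rfl⟩ := Nat.exists_eq_add_of_le (show n + 1 ≤ i by omega)
    have h3 : glue n c g (n + 1 + j) = a j := congrFun hsucc j
    rw [h3, show n + 1 + j + 1 = (n + 1) + (j + 1) by ring, sh_cj, ← sh_sh, hsucc, ← sh_cj]
    exact haA.mono hr0 hrs.le j

/-! ### Approximation of `q` by `𝒰(x)` and by `𝒰` -/

/-- The numbers `x` and `q` are linked by `q^{l+1} x = 1/(q-1)`. Bases slightly above `q` satisfy
the hypotheses of `mem_univ_iff_reflected`. -/
lemma exists_window {q x : ℝ} (hq : 1 < q) (hq2 : q < 2) (hqG : 1 < q * (q - 1)) (hx : 0 < x)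
    {l : ℕ} (hqx : q ^ (l + 1) * x = 1 / (q - 1)) :
    ∃ δ > 0, ∀ p, q < p → p < q + δ →
      p ≤ 2 ∧ p ^ l * x < 1 ∧ 1 / (p - 1) < p ^ (l + 1) * x := by
  have h1 : q ^ l * x < 1 := by
    rw [eq_div_iff (by linarith), pow_succ] at hqx
    by_contra! h
    nlinarith
  have h2 : ∀ᶠ p in nhds q, p ^ l * x < 1 :=
    (show Continuous fun p : ℝ => p ^ l * x by fun_prop).continuousAt.eventually_lt_const h1
  obtain ⟨ε, hε, h3⟩ := Metric.eventually_nhds_iff.1 h2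
  refine ⟨min ε (2 - q), lt_min hε (by linarith), fun p hp hpq => ⟨?_, ?_, ?_⟩⟩
  · linarith [min_le_right ε (2 - q)]
  · apply h3
    rw [Real.dist_eq, abs_of_pos (by linarith)]
    linarith [min_le_left ε (2 - q)]
  · have h4 : 1 / (p - 1) < 1 / (q - 1) :=
      one_div_lt_one_div_of_lt (by linarith) (by linarith)
    have h5 : q ^ (l + 1) * x ≤ p ^ (l + 1) * x := by gcongr
    linarith

/-- If `𝒰(x)` accumulates at `q` from the right, the reflected expansions of
`1 - (p^{l+1} x - 1/(p-1))` have a weak limit in base `q`. It is either the unique expansion of `1`,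
or periodic, and then `q` is a limit of elements of `𝒰` from the left. -/
lemma mem_closure_of_right {q x : ℝ} (hq : 1 < q) (hq2 : q < 2) (hqG : 1 < q * (q - 1))
    (hx : 0 < x) {l : ℕ} (hqx : q ^ (l + 1) * x = 1 / (q - 1))
    (h : ∀ δ > 0, ∃ p ∈ UnivSet x, q < p ∧ p < q + δ) : q ∈ closure (UnivSet 1) := by
  obtain ⟨δ₀, hδ₀, hwin⟩ := exists_window hq hq2 hqG hx hqx
  obtain ⟨d, hd, H⟩ := exists_weak_limit hq
    (fun p c => val p c = 1 - (p ^ (l + 1) * x - 1 / (p - 1))) (by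
      intro δ hδ
      have h1 : Tendsto (fun p : ℝ => p ^ (l + 1) * x - 1 / (p - 1)) (nhds q)
          (nhds (q ^ (l + 1) * x - 1 / (q - 1))) :=
        ((show Continuous fun p : ℝ => p ^ (l + 1) * x by fun_prop).tendsto q).sub
          (tendsto_base hq tendsto_id)
      rw [hqx, sub_self] at h1
      obtain ⟨ε, hε, h2⟩ := Metric.eventually_nhds_iff.1 (h1.eventually_lt_const hδ)
      obtain ⟨p, hp, hqp, hpε⟩ := h (min δ (min δ₀ ε)) (by positivity)
      have h3 := min_le_left δ (min δ₀ ε)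
      have h4 := (min_le_right δ (min δ₀ ε)).trans (min_le_left _ _)
      have h5 := (min_le_right δ (min δ₀ ε)).trans (min_le_right _ _)
      have hp1 : 1 < p := hq.trans hqp
      obtain ⟨hp2, hw1, hw2⟩ := hwin p hqp (by linarith)
      obtain ⟨c, hA, hc⟩ := (mem_univ_iff_reflected hp1 hp2 hx hw1 hw2).1 hp
      have h6 := @h2 p (by rw [Real.dist_eq, abs_of_pos (by linarith)]; linarith)
      have hcc : val p (cj c) < 1 := by
        rw [val_cj hp1, hc, pow_succ]
        nlinarith
      refine ⟨p, hqp, by linarith, c, ?_, fun i => ⟨?_, ?_⟩, hc⟩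
      · rw [hc, abs_lt]
        constructor <;> linarith
      · exact (hA.tails_lt hp1 hp2 (by linarith) i).le
      · exact (hA.cj.tails_lt hp1 hp2 hcc i).le)
  by_cases hA : Adm q d
  · exact subset_closure (mem_univSet_iff.2 ⟨⟨hq, hq2.le⟩, d, hd.1, hA⟩)
  have hw : ∀ i, val q (sh i (cj d)) < 1 := by
    intro i
    refine lt_of_le_of_ne (hd.2 i).2 fun he => ?_
    rcases Nat.eq_zero_or_pos i with rfl | hi
    · rw [sh_zero, val_cj hq, hd.1, sub_eq_iff_eq_add, div_eq_iff (by linarith)] at he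
      nlinarith
    · exact not_antiperiodic hq hx (by omega) hqx hd.1 hi (hd.sh_cj_eq hq hq2 he) H
  have hex : ∃ n, 1 ≤ n ∧ val q (sh n d) = 1 := by
    obtain ⟨n, hn, h1 | h1⟩ := hd.exists_eq hA
    · exact ⟨n, hn, h1⟩
    · exact absurd h1 (hw n).ne
  classical
  have hs := Nat.find_spec hex
  have hm := fun i => Nat.find_min (m := i) hex
  generalize Nat.find hex = n at hs hm
  refine Metric.mem_closure_iff.2 fun δ hδ => ?_
  obtain ⟨r, hr, h1, h2⟩ := exists_univ_left hq hq2.le hd.1 hw hs.1 (hd.sh_eq hq hq2 hs.2)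
    (fun i hi hin => lt_of_le_of_ne (hd.2 i).1 fun he => hm i hin ⟨hi, he⟩) hδ
  refine ⟨r, hr, ?_⟩
  rw [Real.dist_eq, abs_of_pos (by linarith)]
  linarith

/-- For `q` in the closure of `𝒰`, numbers with a unique expansion in base `q` accumulate at `1`
from the left: for `q ∈ 𝒰` by the antiperiodic construction, and otherwise the expansions of `1`
in bases `r ∈ 𝒰` increasing to `q` represent such numbers. -/
lemma exists_adm_near_one {q : ℝ} (hq : 3 / 2 < q) (hq2 : q < 2)
    (h : q ∈ closure (UnivSet 1)) {η : ℝ} (hη : 0 < η) :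
    ∃ c, Adm q c ∧ 1 - η < val q c ∧ val q c < 1 := by
  have hq1 : 1 < q := by linarith
  by_cases hU : q ∈ UnivSet 1
  · obtain ⟨-, d, hd, hA⟩ := mem_univSet_iff.1 hU
    obtain ⟨h1, h2⟩ := tails_of_univ hq hq2 hA hd
    obtain ⟨c, γ, hγ, hc1, hc2, hc⟩ := exists_antiperiodic hq1 hd (fun i => by
      rcases Nat.eq_zero_or_pos i with rfl | hi
      · rw [sh_zero, hd]
      · exact (h1 i hi).le) h2 hη
    exact ⟨c, adm_of_tails fun i _ => ⟨by linarith [(hc i).1], by linarith [(hc i).2]⟩, hc1, hc2⟩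
  · have hgap : ∃ δ > 0, ∀ p ∈ UnivSet 1, q < p → q + δ ≤ p := by
      by_contra! hc
      exact hU (mem_univ_of_right hq hq2 hc)
    obtain ⟨δ, hδ, hgap⟩ := hgap
    obtain ⟨s, hs1, -, hsq, hs⟩ := exists_left hq1 hη
    obtain ⟨r, hr, hqr⟩ := Metric.mem_closure_iff.1 h (min δ (q - s)) (lt_min hδ (by linarith))
    have h1 := min_le_left δ (q - s)
    have h2 := min_le_right δ (q - s)
    rw [Real.dist_eq, abs_lt] at hqr
    have hrq : r < q := by
      rcases lt_trichotomy r q with h3 | rfl | h3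
      · exact h3
      · exact absurd hr hU
      · have := hgap r hr h3
        linarith
    obtain ⟨⟨hr1, -⟩, c, hc, hA⟩ := mem_univSet_iff.1 hr
    have h3 := val_lip hr1 hrq.le c
    have h4 : 1 / (r - 1) ≤ 1 / (s - 1) := one_div_le_one_div_of_le (by linarith) (by linarith)
    refine ⟨c, hA.mono hr1 hrq.le, by linarith, ?_⟩
    by_contra! h5
    have := val_strictAnti hr1 hrq c (by linarith)
    linarith

/-- A unique expansion in base `q` of a number slightly below `1` represents
`1 - (t^{l+1} x - 1/(t-1))` in a base `t` slightly above `q`, by the intermediate value theorem. -/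
lemma exists_univ_right {q x : ℝ} (hq : 3 / 2 < q) (hq2 : q < 2) (hqG : 1 < q * (q - 1))
    (hx : 0 < x) {l : ℕ} (hqx : q ^ (l + 1) * x = 1 / (q - 1))
    (h : q ∈ closure (UnivSet 1)) {δ : ℝ} (hδ : 0 < δ) : ∃ t ∈ UnivSet x, t < q + δ := by
  have hq1 : 1 < q := by linarith
  obtain ⟨δ₀, hδ₀, hwin⟩ := exists_window hq1 hq2 hqG hx hqx
  have hm : 0 < min δ δ₀ := lt_min hδ hδ₀
  have h1 := min_le_left δ δ₀
  have h2 := min_le_right δ δ₀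
  obtain ⟨s, hs⟩ : ∃ s, s = q + min δ δ₀ / 2 := ⟨_, rfl⟩
  have hqs : q < s := by linarith
  have hpow : q ^ (l + 1) < s ^ (l + 1) := pow_lt_pow_left₀ hqs (by linarith) (by omega)
  obtain ⟨c, hA, hc1, hc2⟩ := exists_adm_near_one hq hq2 h
    (mul_pos hx (sub_pos.2 hpow))
  have hcont : ContinuousOn (fun t => val t c + (t ^ (l + 1) * x - 1 / (t - 1))) (Icc q s) := by
    refine ((continuousOn_val c).mono fun t ht => hq1.trans_le ht.1).add
      (ContinuousOn.sub (by fun_prop) (ContinuousOn.div (by fun_prop) (by fun_prop) ?_))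
    intro t ht
    have := ht.1
    exact (show 0 < t - 1 by linarith).ne'
  have h3 := val_lip hq1 hqs.le c
  obtain ⟨t, ⟨hqt, hts⟩, ht⟩ := intermediate_value_Ioo hqs.le hcont
    (show (1 : ℝ) ∈ Ioo _ _ by
      constructor
      · linarith
      · nlinarith)
  simp only at ht
  obtain ⟨ht2, hw1, hw2⟩ := hwin t hqt (by linarith)
  refine ⟨t, (mem_univ_iff_reflected (by linarith) ht2 hx hw1 hw2).2
    ⟨c, hA.mono hq1 hqt.le, by linarith⟩, by linarith⟩

/-- for `q_G^{-k} ≤ x < q_G^{-k+1}` and `q ∈ (1,2)` with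
`q^k (q-1) = 1/x`: (i) `q > q_G` and `q ∉ 𝒰(x)`; (ii) `q_s(x) ≥ q`, with
equality iff `q` lies in the closure of `𝒰(1)`. -/
theorem qs_lower_bound (k : ℕ) (hk : 1 ≤ k) (x q : ℝ)
    (hx1 : qG ^ (-(k : ℤ)) ≤ x) (hx2 : x < qG ^ (-(k : ℤ) + 1))
    (hq : q ∈ Set.Ioo (1 : ℝ) 2) (heq : q ^ k * (q - 1) = 1 / x) :
    qG < q ∧ q ∉ UnivSet x ∧ q ≤ qs x ∧ (qs x = q ↔ q ∈ closure (UnivSet 1)) := by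
  obtain ⟨hG, hG1⟩ := qG_facts
  obtain ⟨hq1, hq2⟩ := hq
  have hG0 : 0 < qG := by linarith
  obtain ⟨l, rfl⟩ := Nat.exists_eq_add_of_le' hk
  have hx : 0 < x := (zpow_pos hG0 _).trans_le hx1
  have hxk : 1 ≤ qG ^ (l + 1) * x := by
    rw [zpow_neg, zpow_natCast, inv_le_iff_one_le_mul₀ (by positivity)] at hx1
    linarith
  have hxl : qG ^ l * x < 1 := by
    rw [show (-((l + 1 : ℕ) : ℤ) + 1) = -(l : ℤ) by push_cast; ring, zpow_neg, zpow_natCast,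
      lt_inv_comm₀ hx (by positivity), inv_eq_one_div, lt_div_iff₀ hx] at hx2
    exact hx2
  have hxlt : x < 1 := by
    have := one_le_pow₀ (show 1 ≤ qG by linarith) (n := l)
    nlinarith
  have heq' : q ^ (l + 1) * (q - 1) * x = 1 := by rw [heq]; field_simp
  have hqx : q ^ (l + 1) * x = 1 / (q - 1) := by
    rw [eq_div_iff (by linarith)]; linarith
  have hqG : qG < q := by
    by_contra! h
    have h1 : q ^ (l + 1) * (q - 1) * x ≤ qG ^ (l + 1) * (qG - 1) * x := by
      gcongr
    have h2 : qG ^ (l + 1) * (qG - 1) * x = qG ^ l * x := by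
      rw [pow_succ]
      linear_combination qG ^ l * x * hG1
    linarith
  have hqq : 1 < q * (q - 1) := by nlinarith
  have hlt : ∀ p ∈ UnivSet x, q < p := by
    intro p hp
    have h1 := univ_bound hx hk hxk hp
    have hp1 : 1 < p := hp.1.1
    by_contra! h
    have h2 : p ^ (l + 1) * x ≤ q ^ (l + 1) * x := by gcongr
    have h3 : 1 / (q - 1) ≤ 1 / (p - 1) := one_div_le_one_div_of_le (by linarith) (by linarith)
    linarith
  have hne := univSet_nonempty hx hxlt
  have hle : q ≤ qs x := le_csInf hne fun p hp => (hlt p hp).le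
  refine ⟨hqG, fun h => (hlt q h).false, hle, fun h => ?_, fun h => ?_⟩
  · refine mem_closure_of_right hq1 hq2 hqq hx hqx fun δ hδ => ?_
    obtain ⟨p, hp, h1⟩ := exists_lt_of_csInf_lt hne (show sInf (UnivSet x) < q + δ by
      rw [← qs, h]; linarith)
    exact ⟨p, hp, hlt p hp, h1⟩
  · refine le_antisymm (le_of_forall_pos_lt_add fun δ hδ => ?_) hle
    obtain ⟨t, ht, h1⟩ := exists_univ_right (by linarith) hq2 hqq hx hqx h hδ
    exact (csInf_le ⟨q, fun p hp => (hlt p hp).le⟩ ht).trans_lt h1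
end
end
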